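/- Let ℓ ≥ 2 be an integer and x > 0. Let (a_n) be a sequence of real numbers and (b_n) a sequence of positive real numbers such that, as n → ∞, a_n = x·Z_{ℓ−1}^{[ℓ]}((Z_ℓ^{[ℓ]})^{−1}(n/x)) + o(n^{(ℓ−1)/(2ℓ)}) and b_n = ((x·K_ℓ)^{1/(2ℓ)}/√(ℓ(ℓ−1))) · n^{(ℓ−1)/(2ℓ)} · (1 + o(1)). Then for every real s, ln E[exp(s·(K_{ℓ,n} − a_n)/b_n)] converges to s²/2 as n → ∞, where the expectation is with respect to P_{ℓ,n,x}. -/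

import Mathlib

open Filter Topology Real MeasureTheory Asymptotics

noncomputable section

/-- Number of joint orbits of the subgroup generated by a tuple of permutations. -/
def kappa {ℓ n : ℕ} (σ : Fin ℓ → Equiv.Perm (Fin n)) : ℕ :=
  Nat.card (MulAction.orbitRel.Quotient (Subgroup.closure (Set.range σ)) (Fin n))

/-- `Acount ℓ n k` is the number of commuting `ℓ`-tuples of permutations of `{1,…,n}`
with exactly `k` joint orbits. -/
def Acount (ℓ n k : ℕ) : ℕ :=
  Nat.card {σ : Fin ℓ → Equiv.Perm (Fin n) //
    (∀ i j, σ i * σ j = σ j * σ i) ∧ kappa σ = k}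

/-- `Hpoly ℓ n x = (1/n!) ∑_k A(ℓ,n,k) x^k`. -/
def Hpoly (ℓ n : ℕ) (x : ℝ) : ℝ :=
  (1 / (n.factorial : ℝ)) * ∑ k ∈ Finset.range (n + 1), (Acount ℓ n k : ℝ) * x ^ k

/-- Expectation, under the Ewens-like measure `P_{ℓ,n,x}`, of `g(K_{ℓ,n})`. -/
def expectK (ℓ n : ℕ) (x : ℝ) (g : ℕ → ℝ) : ℝ :=
  (∑ k ∈ Finset.range (n + 1), g k * (Acount ℓ n k : ℝ) * x ^ k) /
    (∑ k ∈ Finset.range (n + 1), (Acount ℓ n k : ℝ) * x ^ k)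

/-- Mean of `K_{ℓ,n}` under `P_{ℓ,n,x}`. -/
def meanK (ℓ n : ℕ) (x : ℝ) : ℝ := expectK ℓ n x (fun k => (k : ℝ))

/-- Variance of `K_{ℓ,n}` under `P_{ℓ,n,x}`. -/
def varK (ℓ n : ℕ) (x : ℝ) : ℝ :=
  expectK ℓ n x (fun k => ((k : ℝ) - meanK ℓ n x) ^ 2)

/-- Real Riemann zeta values (as a series), `zetaR s = ∑_{m ≥ 1} m^{-s}`. -/
def zetaR (s : ℝ) : ℝ := ∑' m : ℕ, 1 / ((m : ℝ) + 1) ^ s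

/-- The constant `K_ℓ = (ℓ-1)! ζ(2)⋯ζ(ℓ)`. -/
def Kconst (ℓ : ℕ) : ℝ := ((ℓ - 1).factorial : ℝ) * ∏ j ∈ Finset.Icc 2 ℓ, zetaR (j : ℝ)

/-- The multiple series `Z^{[ℓ]}_{α_1,…,α_ℓ}(t)` with complex exponents. -/
def Zc (ℓ : ℕ) (α : Fin ℓ → ℂ) (t : ℝ) : ℂ :=
  ∑' δ : Fin ℓ → ℕ+,
    (∏ i, ((δ i : ℕ) : ℂ) ^ (α i - 1)) *
      Complex.exp (-(((∏ i, ((δ i : ℕ) : ℝ)) * t : ℝ) : ℂ))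

/-- The multiple series `Z^{[ℓ]}_{α_1,…,α_ℓ}(t)` with real exponents. -/
def Zr (ℓ : ℕ) (α : Fin ℓ → ℝ) (t : ℝ) : ℝ :=
  ∑' δ : Fin ℓ → ℕ+,
    (∏ i, ((δ i : ℕ) : ℝ) ^ (α i - 1)) *
      Real.exp (-(∏ i, ((δ i : ℕ) : ℝ)) * t)

/-- The staircase series `Z_m^{[ℓ]}(t) = Z^{[ℓ]}_{m,m-1,…,m-ℓ+1}(t)`. -/
def Zstair (ℓ : ℕ) (m : ℤ) (t : ℝ) : ℝ :=
  Zr ℓ (fun i => (m : ℝ) - (i : ℕ)) t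

/-- The inverse function `(Z_ℓ^{[ℓ]})^{-1} : (0,∞) → (0,∞)`. -/
def ZstairInv (ℓ : ℕ) (u : ℝ) : ℝ :=
  Function.invFunOn (Zstair ℓ ℓ) (Set.Ioi 0) u

/-- The function `q_{ℓ,n}(y,u,θ)` from the saddle point analysis. -/
def qfun (ℓ n : ℕ) (y u θ : ℝ) : ℂ :=
  Complex.I * (n : ℂ) * (θ : ℂ) - (y : ℂ) * ∑' δ : Fin ℓ → ℕ+,
    (∏ i, ((δ i : ℕ) : ℂ) ^ ((ℓ : ℤ) - 2 - (i : ℕ))) *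
      Complex.exp (-(((∏ i, ((δ i : ℕ) : ℝ)) * u : ℝ) : ℂ)) *
      (Complex.exp (Complex.I * (((∏ i, ((δ i : ℕ) : ℝ)) * θ : ℝ) : ℂ)) - 1)

/-- The normalizing sequence `b_n = ((x K_ℓ)^{1/(2ℓ)}/√(ℓ(ℓ-1))) n^{(ℓ-1)/(2ℓ)}`. -/
def bseq (ℓ : ℕ) (x : ℝ) (n : ℕ) : ℝ :=
  (x * Kconst ℓ) ^ ((1 : ℝ) / (2 * (ℓ : ℝ))) / Real.sqrt ((ℓ : ℝ) * ((ℓ : ℝ) - 1)) *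
    (n : ℝ) ^ (((ℓ : ℝ) - 1) / (2 * (ℓ : ℝ)))

/-- The sequence `x_n = x e^{s/b_n}`. -/
def xseq (ℓ : ℕ) (x s : ℝ) (n : ℕ) : ℝ := x * Real.exp (s / bseq ℓ x n)

/-- The saddle point sequence `t_n = (Z_ℓ^{[ℓ]})^{-1}(n/x)`. -/
def tseq (ℓ : ℕ) (x : ℝ) (n : ℕ) : ℝ := ZstairInv ℓ ((n : ℝ) / x)

end

open Filter Topology Real MeasureTheory Asymptotics
open scoped ENNReal

namespace KP

/-- Orbit setoid of a homomorphism to permutations. -/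
def orbS {G X : Type*} [Group G] (φ : G →* Equiv.Perm X) : Setoid X where
  r a b := ∃ g, φ g a = b
  iseqv := ⟨fun a => ⟨1, by simp⟩, fun {a b} ⟨g, h⟩ => ⟨g⁻¹, by simp [← h]⟩,
    fun {a b c} ⟨g, h⟩ ⟨k, h'⟩ => ⟨k * g, by simp [h, h']⟩⟩

noncomputable def orb {G X : Type*} [Group G] (φ : G →* Equiv.Perm X) : ℕ :=
  Nat.card (Quotient (orbS φ))

noncomputable def RR (G X : Type*) [Group G] (x : ℝ≥0∞) : ℝ≥0∞ :=
  ∑' φ : G →* Equiv.Perm X, x ^ orb φ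

def homCongr {G X Y : Type*} [Group G] (f : X ≃ Y) :
    (G →* Equiv.Perm X) ≃ (G →* Equiv.Perm Y) where
  toFun φ := f.permCongrHom.toMonoidHom.comp φ
  invFun φ := f.symm.permCongrHom.toMonoidHom.comp φ
  left_inv φ := by ext; simp
  right_inv φ := by ext; simp

lemma RR_congr {G X Y : Type*} [Group G] (f : X ≃ Y) (x : ℝ≥0∞) : RR G X x = RR G Y x := by
  unfold RR
  rw [← (homCongr (G := G) f).tsum_eq]
  refine tsum_congr fun φ => ?_
  congr 1
  refine Nat.card_congr (Quotient.congr f ?_)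
  intro a b
  constructor
  · rintro ⟨g, h⟩; exact ⟨g, by simp [homCongr, h]⟩
  · rintro ⟨g, h⟩; refine ⟨g, f.injective ?_⟩
    rw [← h]; simp [homCongr]

variable {G X : Type*} [Group G]

open Classical in
/-- extension -/
noncomputable def extHom (L : Subgroup G) (e : G ⧸ L ↪ X)
    (ψ : G →* Equiv.Perm {y // ¬ (y ∈ Set.range e)}) : G →* Equiv.Perm X :=
  (Equiv.Perm.subtypeCongrHom (fun y => y ∈ Set.range e)).comp
    (MonoidHom.prod
      ((Equiv.permCongrHom (Equiv.ofInjective e e.injective)).toMonoidHom.comp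
        (MulAction.toPermHom G (G ⧸ L))) ψ)

lemma extHom_apply_range (L : Subgroup G) (e : G ⧸ L ↪ X)
    (ψ : G →* Equiv.Perm {y // ¬ (y ∈ Set.range e)}) (g : G) (h : G ⧸ L) :
    extHom L e ψ g (e h) = e (g • h) := by
  unfold extHom
  simp [Equiv.Perm.subtypeCongrHom, Equiv.Perm.subtypeCongr.left_apply]

lemma extHom_apply_compl (L : Subgroup G) (e : G ⧸ L ↪ X)
    (ψ : G →* Equiv.Perm {y // ¬ (y ∈ Set.range e)}) (g : G) (y : {y // ¬ (y ∈ Set.range e)}) :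
    extHom L e ψ g y = ψ g y := by
  unfold extHom
  simp [Equiv.Perm.subtypeCongrHom, Equiv.Perm.subtypeCongr.right_apply, y.2]

lemma compat_smul (L : Subgroup G) (e : G ⧸ L ↪ X) (φ : G →* Equiv.Perm X)
    (h : ∀ g : G, φ g (e (1 : G)) = e g) (g : G) (k : G ⧸ L) : φ g (e k) = e (g • k) := by
  induction k using QuotientGroup.induction_on with
  | H k =>
    rw [← h k, ← Equiv.Perm.mul_apply, ← map_mul, h]
    rfl

noncomputable def restr (L : Subgroup G) (e : G ⧸ L ↪ X) (φ : G →* Equiv.Perm X)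
    (h : ∀ g : G, φ g (e (1 : G)) = e g) : G →* Equiv.Perm {y // ¬ (y ∈ Set.range e)} where
  toFun g := (φ g).subtypePerm (by
    intro y
    rw [not_iff_not]
    constructor
    · rintro ⟨k, hk⟩
      refine ⟨g⁻¹ • k, ?_⟩
      rw [← compat_smul L e φ h, hk]; simp
    · rintro ⟨k, hk⟩
      refine ⟨g • k, ?_⟩
      rw [← compat_smul L e φ h, hk])
  map_one' := by ext; simp
  map_mul' a b := by
    ext y
    simp only [map_mul]
    rfl

noncomputable def compatEquiv (L : Subgroup G) (e : G ⧸ L ↪ X) :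
    {φ : G →* Equiv.Perm X // ∀ g : G, φ g (e (1 : G)) = e g} ≃
      (G →* Equiv.Perm {y // ¬ (y ∈ Set.range e)}) where
  toFun φ := restr L e φ.1 φ.2
  invFun ψ := ⟨extHom L e ψ, fun g => by rw [extHom_apply_range]; simp⟩
  left_inv := by
    rintro ⟨φ, h⟩
    apply Subtype.ext
    ext g y
    by_cases hy : y ∈ Set.range e
    · obtain ⟨k, rfl⟩ := hy
      simp only
      rw [extHom_apply_range, compat_smul L e φ h]
    · exact extHom_apply_compl L e _ g ⟨y, hy⟩
  right_inv ψ := by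
    ext g y
    exact extHom_apply_compl L e ψ g y

lemma orb_ext [Finite X] (L : Subgroup G) (e : G ⧸ L ↪ X)
    (ψ : G →* Equiv.Perm {y // ¬ (y ∈ Set.range e)}) : orb (extHom L e ψ) = orb ψ + 1 := by
  classical
  unfold orb
  rw [← Finite.card_option]
  symm
  refine Nat.card_congr (Equiv.ofBijective (fun o : Option (Quotient (orbS ψ)) =>
    o.elim (Quotient.mk (orbS (extHom L e ψ)) (e (1 : G)))
      (Quotient.map' (s₁ := orbS ψ) (s₂ := orbS (extHom L e ψ)) (fun y => y.1) ?_)) ⟨?_, ?_⟩)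
  · rintro a b ⟨g, h⟩
    exact ⟨g, by rw [extHom_apply_compl, h]⟩
  · intro a b hab
    rcases a with _ | a <;> rcases b with _ | b
    · rfl
    · induction b using Quotient.inductionOn with | h b =>
      exfalso
      obtain ⟨g, hg⟩ := Quotient.exact hab
      rw [extHom_apply_range] at hg
      exact b.2 ⟨_, hg⟩
    · induction a using Quotient.inductionOn with | h b =>
      exfalso
      obtain ⟨g, hg⟩ := Quotient.exact hab.symm
      rw [extHom_apply_range] at hg
      exact b.2 ⟨_, hg⟩
    · induction b using Quotient.inductionOn with | h b =>
      induction a using Quotient.inductionOn with | h a =>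
      obtain ⟨g, hg⟩ := Quotient.exact hab
      rw [extHom_apply_compl] at hg
      congr 1
      exact Quotient.sound ⟨g, Subtype.ext hg⟩
  · intro q
    induction q using Quotient.inductionOn with | h y =>
    by_cases hy : y ∈ Set.range e
    · obtain ⟨k, rfl⟩ := hy
      refine ⟨none, ?_⟩
      induction k using QuotientGroup.induction_on with | H k =>
      exact Quotient.sound ⟨k, by rw [extHom_apply_range]; simp⟩
    · exact ⟨some (Quotient.mk _ ⟨y, hy⟩), rfl⟩

noncomputable def embOf (p : X) (φ : G →* Equiv.Perm X) :
    Σ L : Subgroup G, (G ⧸ L ↪ X) :=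
  letI : MulAction G X := MulAction.compHom X φ
  ⟨MulAction.stabilizer G p, ⟨MulAction.ofQuotientStabilizer G p,
    MulAction.injective_ofQuotientStabilizer G p⟩⟩

lemma embOf_apply (p : X) (φ : G →* Equiv.Perm X) (g : G) :
    (embOf p φ).2 g = φ g p := rfl

lemma embOf_eq (p : X) (φ : G →* Equiv.Perm X) (L : Subgroup G) (e : G ⧸ L ↪ X)  :
    embOf p φ = ⟨L, e⟩ ↔ ∀ g : G, φ g p = e g := by
  constructor
  · intro h g
    have := embOf_apply p φ g
    rw [← this]
    rw [Sigma.ext_iff] at h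
    obtain ⟨h1, h2⟩ := h
    simp only at h1 h2
    subst h1
    rw [eq_of_heq h2]
  · intro h
    have hL : (embOf p φ).1 = L := by
      ext g
      have : g ∈ (embOf p φ).1 ↔ φ g p = p := Iff.rfl
      rw [this, h]
      have h1 := h 1
      simp only [map_one, Equiv.Perm.coe_one, id_eq] at h1
      conv_lhs => rhs; rw [h1]
      rw [e.injective.eq_iff, eq_comm, QuotientGroup.eq]
      simp
    have key : ∀ (M : Σ L : Subgroup G, (G ⧸ L ↪ X)), M.1 = L →
        (∀ g : G, M.2 g = e g) → M = ⟨L, e⟩ := by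
      rintro ⟨M, f⟩ h1 h2
      simp only at h1
      subst h1
      congr 1
      ext k
      induction k using QuotientGroup.induction_on with | H k => exact h2 k
    exact key _ hL (fun g => (embOf_apply p φ g).trans (h g))

lemma embOf_base (p : X) (φ : G →* Equiv.Perm X) (L : Subgroup G) (e : G ⧸ L ↪ X)
    (h : embOf p φ = ⟨L, e⟩) : e (1 : G) = p := by
  have h1 := (embOf_eq _ _ _ _).1 h 1
  simpa using h1.symm

noncomputable def midEquiv (M : Σ L : Subgroup G, (G ⧸ L ↪ X)) :
    {φ : G →* Equiv.Perm X // ∀ g : G, φ g (M.2 (1 : G)) = M.2 g} ≃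
      {z : X × (G →* Equiv.Perm X) // embOf z.1 z.2 = M} where
  toFun φ := ⟨(M.2 (1 : G), φ.1), (embOf_eq _ _ M.1 M.2).2 φ.2⟩
  invFun z := ⟨z.1.2, fun g => by
    rw [embOf_base _ _ M.1 M.2 z.2]
    exact (embOf_eq _ _ M.1 M.2).1 z.2 g⟩
  left_inv _ := rfl
  right_inv z := by
    apply Subtype.ext
    apply Prod.ext
    · exact embOf_base _ _ M.1 M.2 z.2
    · rfl

noncomputable def fibEquiv (M : Σ L : Subgroup G, (G ⧸ L ↪ X)) :
    (G →* Equiv.Perm {y // ¬ (y ∈ Set.range M.2)}) ≃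
      {z : X × (G →* Equiv.Perm X) // embOf z.1 z.2 = M} :=
  (compatEquiv M.1 M.2).symm.trans (midEquiv M)

noncomputable def bigEquiv (G X : Type*) [Group G] : (Σ M : (Σ L : Subgroup G, (G ⧸ L ↪ X)),
    (G →* Equiv.Perm {y // ¬ (y ∈ Set.range M.2)})) ≃ X × (G →* Equiv.Perm X) :=
  (Equiv.sigmaCongrRight (fun M => fibEquiv M)).trans
    (Equiv.sigmaFiberEquiv (fun z : X × (G →* Equiv.Perm X) => embOf z.1 z.2))

lemma bigEquiv_snd (M) : (bigEquiv G X M).2 = extHom M.1.1 M.1.2 M.2 := rfl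

theorem card_mul_RR [Fintype X] (x : ℝ≥0∞) :
    (Fintype.card X : ℝ≥0∞) * RR G X x =
      x * ∑' L : Subgroup G, ∑' e : G ⧸ L ↪ X, RR G {y // ¬ (y ∈ Set.range e)} x := by
  have h1 : (Fintype.card X : ℝ≥0∞) * RR G X x =
      ∑' z : X × (G →* Equiv.Perm X), x ^ orb z.2 := by
    rw [ENNReal.tsum_prod (f := fun (_ : X) (φ : G →* Equiv.Perm X) => x ^ orb φ)]
    simp [RR, tsum_fintype]
  rw [h1, ← (bigEquiv G X).tsum_eq]
  simp_rw [bigEquiv_snd, orb_ext, pow_succ']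
  rw [ENNReal.tsum_mul_left]
  congr 1
  rw [ENNReal.tsum_sigma (f := fun (M : Σ L : Subgroup G, (G ⧸ L ↪ X)) (ψ : G →* Equiv.Perm {y // ¬ (y ∈ Set.range M.2)}) => x ^ orb ψ),
    ENNReal.tsum_sigma (f := fun (L : Subgroup G) (e : G ⧸ L ↪ X) => ∑' (ψ : G →* Equiv.Perm {y // ¬ (y ∈ Set.range e)}), x ^ orb ψ)]
  rfl

end KP

open Filter Topology Real MeasureTheory Asymptotics
open scoped ENNReal

namespace KP

noncomputable def SubSum (G : Type*) [Group G] (f : ℕ → ℝ≥0∞) : ℝ≥0∞ :=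
  ∑' L : {L : Subgroup G // L.index ≠ 0}, f L.1.index

theorem RR_rec (G : Type*) [Group G] (n : ℕ) (x : ℝ≥0∞) :
    (n : ℝ≥0∞) * RR G (Fin n) x =
      x * SubSum G (fun N => (n.descFactorial N : ℝ≥0∞) * RR G (Fin (n - N)) x) := by
  classical
  have h := card_mul_RR (G := G) (X := Fin n) x
  rw [Fintype.card_fin] at h
  rw [h]
  congr 1
  unfold SubSum
  rw [← tsum_subtype_eq_of_support_subset (f := fun L : Subgroup G =>
    ∑' e : G ⧸ L ↪ Fin n, RR G {y // ¬ (y ∈ Set.range e)} x) (s := {L : Subgroup G | L.index ≠ 0})]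
  · refine tsum_congr ?_
    rintro ⟨L, hL⟩
    have hL' : L.index ≠ 0 := hL
    have hf : Finite (G ⧸ L) := (Subgroup.finiteIndex_iff_finite_quotient).1 ⟨hL⟩
    have := Fintype.ofFinite (G ⧸ L)
    have hc : Fintype.card (G ⧸ L) = L.index := by
      rw [Subgroup.index, Nat.card_eq_fintype_card]
    have : ∀ e : G ⧸ L ↪ Fin n, RR G {y // ¬ (y ∈ Set.range e)} x = RR G (Fin (n - L.index)) x := by
      intro e
      apply RR_congr
      apply Fintype.equivFinOfCardEq
      rw [Fintype.card_subtype_compl, Fintype.card_fin]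
      congr 1
      rw [← hc]
      exact (Fintype.card_congr (Equiv.ofInjective e e.injective)).symm
    simp_rw [this]
    rw [tsum_fintype, Finset.sum_const, Finset.card_univ, Fintype.card_embedding_eq, hc]
    simp
  · intro L hL
    by_contra h0
    simp only [Set.mem_ofPred_eq, not_not] at h0
    apply hL
    have : IsEmpty (G ⧸ L ↪ Fin n) := by
      constructor
      intro e
      have := Finite.of_injective e e.injective
      have : L.FiniteIndex := Subgroup.finiteIndex_iff_finite_quotient.2 this
      exact this.index_ne_zero h0
    simp

variable {G : Type*} [CommGroup G]

noncomputable def latt (L : Subgroup G) (m : ℕ+) (v : G ⧸ L) : Subgroup (G × Multiplicative ℤ) :=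
  (Subgroup.zpowers ((v, Multiplicative.ofAdd (m : ℤ)) : (G ⧸ L) × Multiplicative ℤ)).comap
    (MonoidHom.prodMap (QuotientGroup.mk' L) (MonoidHom.id _))

lemma mem_latt (L : Subgroup G) (m : ℕ+) (v : G ⧸ L) (g : G) (k : ℤ) :
    (g, Multiplicative.ofAdd k) ∈ latt L m v ↔ ∃ j : ℤ, v ^ j = g ∧ j * m = k := by
  unfold latt
  rw [Subgroup.mem_comap, Subgroup.mem_zpowers_iff]
  refine exists_congr fun j => ?_
  rw [Prod.ext_iff]
  simp only [Prod.pow_mk, ← ofAdd_zsmul, smul_eq_mul]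
  rfl

lemma latt_comap (L : Subgroup G) (m : ℕ+) (v : G ⧸ L) :
    (latt L m v).comap (MonoidHom.inl G (Multiplicative ℤ)) = L := by
  ext g
  rw [Subgroup.mem_comap]
  have : MonoidHom.inl G (Multiplicative ℤ) g = (g, Multiplicative.ofAdd 0) := rfl
  rw [this, mem_latt]
  constructor
  · rintro ⟨j, h1, h2⟩
    have : j = 0 := by
      rcases mul_eq_zero.1 h2 with h | h
      · exact h
      · exact absurd h (by exact_mod_cast m.ne_zero)
    subst this
    rw [zpow_zero, eq_comm, QuotientGroup.eq_one_iff] at h1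
    exact h1
  · intro h
    refine ⟨0, ?_, by simp⟩
    rw [zpow_zero, eq_comm, QuotientGroup.eq_one_iff]
    exact h

lemma latt_map (L : Subgroup G) (m : ℕ+) (v : G ⧸ L) :
    (latt L m v).map (MonoidHom.snd G (Multiplicative ℤ)) =
      Subgroup.zpowers (Multiplicative.ofAdd (m : ℤ)) := by
  ext k
  rw [Subgroup.mem_map, Subgroup.mem_zpowers_iff]
  constructor
  · rintro ⟨⟨g, k'⟩, h1, rfl⟩
    obtain ⟨j, -, h⟩ := (mem_latt L m v g (Multiplicative.toAdd k')).1 h1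
    refine ⟨j, ?_⟩
    rw [← ofAdd_zsmul, smul_eq_mul, h]; rfl
  · rintro ⟨j, rfl⟩
    induction v using QuotientGroup.induction_on with | H v =>
    refine ⟨(v ^ j, Multiplicative.ofAdd (j * (m : ℤ))), ?_, ?_⟩
    · rw [mem_latt]; exact ⟨j, by simp, rfl⟩
    · rw [← ofAdd_zsmul, smul_eq_mul]; rfl

lemma index_zpowers (m : ℤ) :
    (Subgroup.zpowers (Multiplicative.ofAdd m)).index = m.natAbs := by
  have := Int.index_zmultiples m
  rw [← this]
  rfl

lemma index_prod (M : Subgroup (G × Multiplicative ℤ)) :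
    M.index = (M.comap (MonoidHom.inl G (Multiplicative ℤ))).index *
      (M.map (MonoidHom.snd G (Multiplicative ℤ))).index := by
  have hs : (MonoidHom.snd G (Multiplicative ℤ)).range = ⊤ :=
    MonoidHom.range_eq_top.2 (fun k => ⟨(1, k), rfl⟩)
  rw [Subgroup.index_map, Subgroup.index_comap, hs, Subgroup.index_top, mul_one]
  have : (MonoidHom.inl G (Multiplicative ℤ)).range = (MonoidHom.snd G (Multiplicative ℤ)).ker := by
    ext ⟨a, b⟩
    rw [MonoidHom.mem_ker, MonoidHom.mem_range]
    constructor
    · rintro ⟨y, hy⟩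
      exact (congrArg Prod.snd hy).symm
    · intro hb
      exact ⟨a, Prod.ext rfl hb.symm⟩
  rw [this, ← Subgroup.relIndex_sup_left, sup_comm,
    Subgroup.relIndex_mul_index le_sup_right]

lemma latt_index (L : Subgroup G) (m : ℕ+) (v : G ⧸ L) : (latt L m v).index = L.index * m := by
  rw [index_prod, latt_comap, latt_map, index_zpowers]; simp

lemma latt_inj (L L' : Subgroup G) (m m' : ℕ+) (v : G ⧸ L) (v' : G ⧸ L')
    (h : latt L m v = latt L' m' v') : L = L' ∧ m = m' ∧ HEq v v' := by
  have h1 : L = L' := by rw [← latt_comap L m v, h, latt_comap]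
  subst h1
  have h2 : m = m' := by
    have := congrArg (fun M => (M.map (MonoidHom.snd G (Multiplicative ℤ))).index) h
    simp only [latt_map, index_zpowers] at this
    apply PNat.eq
    simpa using this
  subst h2
  refine ⟨rfl, rfl, ?_⟩
  apply heq_of_eq
  induction v using QuotientGroup.induction_on with | H g =>
  have : (g, Multiplicative.ofAdd (m : ℤ)) ∈ latt L m g := by
    rw [mem_latt]; exact ⟨1, by simp⟩
  rw [h, mem_latt] at this
  obtain ⟨j, hj, hj2⟩ := this
  have : j = 1 := by
    have hm : (m : ℤ) ≠ 0 := by exact_mod_cast m.ne_zero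
    exact mul_right_cancel₀ hm (by rw [hj2, one_mul])
  subst this
  simpa using hj.symm

lemma latt_surj (M : Subgroup (G × Multiplicative ℤ)) (hM : M.index ≠ 0) :
    ∃ (L : Subgroup G) (m : ℕ+) (v : G ⧸ L), L.index ≠ 0 ∧ latt L m v = M := by
  have hi := index_prod M
  rw [hi] at hM
  obtain ⟨h1, h2⟩ := mul_ne_zero_iff.1 hM
  obtain ⟨z, hz⟩ := (Subgroup.isCyclic_iff_exists_zpowers_eq_top
    (M.map (MonoidHom.snd G (Multiplicative ℤ)))).1 inferInstance
  obtain ⟨m, hm⟩ : ∃ m : ℕ+, Subgroup.zpowers (Multiplicative.ofAdd (m : ℤ)) =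
      M.map (MonoidHom.snd G (Multiplicative ℤ)) := by
    have hz0 : (Multiplicative.toAdd z).natAbs ≠ 0 := by
      rw [← index_zpowers]; 
      exact hz ▸ h2
    refine ⟨⟨_, Nat.pos_of_ne_zero hz0⟩, ?_⟩
    rw [← hz]
    simp only [PNat.mk_coe]
    rcases Int.natAbs_eq (Multiplicative.toAdd z) with h | h
    · rw [← h]; rfl
    · have : z = (Multiplicative.ofAdd ((Multiplicative.toAdd z).natAbs : ℤ))⁻¹ := by
        rw [← ofAdd_neg, ← h]; rfl
      conv_rhs => rw [this]
      rw [Subgroup.zpowers_inv]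
  have hmem : Multiplicative.ofAdd (m : ℤ) ∈ M.map (MonoidHom.snd G (Multiplicative ℤ)) := by
    rw [← hm]; exact Subgroup.mem_zpowers _
  obtain ⟨⟨g, k'⟩, hg, hk⟩ := hmem
  have hk' : k' = Multiplicative.ofAdd (m : ℤ) := hk
  subst hk'
  refine ⟨_, m, (g : G ⧸ (M.comap (MonoidHom.inl G (Multiplicative ℤ)))), h1, ?_⟩
  ext ⟨a, k⟩
  change (a, Multiplicative.ofAdd (Multiplicative.toAdd k)) ∈ _ ↔ _
  rw [mem_latt]
  have hpow : ∀ j : ℤ, (g, Multiplicative.ofAdd (m : ℤ)) ^ j = (g ^ j, Multiplicative.ofAdd (j * m)) := by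
    intro j
    rw [Prod.pow_mk, ← ofAdd_zsmul, smul_eq_mul]
  have hq : ∀ j : ℤ, ((g : G ⧸ (M.comap (MonoidHom.inl G (Multiplicative ℤ)))) ^ j = a ↔
      (a, Multiplicative.ofAdd (j * m)) ∈ M) := by
    intro j
    rw [← QuotientGroup.mk_zpow, QuotientGroup.eq, Subgroup.mem_comap]
    have h3 := M.zpow_mem hg j
    rw [← Subgroup.mul_mem_cancel_left M h3, hpow]
    simp
  constructor
  · rintro ⟨j, hj, hj2⟩
    rw [hq, hj2] at hj
    exact hj
  · intro hak
    have : k ∈ M.map (MonoidHom.snd G (Multiplicative ℤ)) := ⟨_, hak, rfl⟩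
    rw [← hm, Subgroup.mem_zpowers_iff] at this
    obtain ⟨j, rfl⟩ := this
    rw [← ofAdd_zsmul, smul_eq_mul] at hak ⊢
    exact ⟨j, (hq j).2 hak, rfl⟩

noncomputable def lattEquiv : (Σ L : {L : Subgroup G // L.index ≠ 0}, ℕ+ × (G ⧸ L.1)) ≃
    {M : Subgroup (G × Multiplicative ℤ) // M.index ≠ 0} :=
  Equiv.ofBijective (fun z => ⟨latt z.1.1 z.2.1 z.2.2, by
    rw [latt_index]; exact mul_ne_zero z.1.2 z.2.1.ne_zero⟩) (by
    constructor
    · rintro ⟨⟨L, hL⟩, m, v⟩ ⟨⟨L', hL'⟩, m', v'⟩ h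
      obtain ⟨rfl, rfl, h3⟩ := latt_inj _ _ _ _ _ _ (Subtype.ext_iff.1 h)
      have h4 : v = v' := eq_of_heq h3
      subst h4
      rfl
    · rintro ⟨M, hM⟩
      obtain ⟨L, m, v, h1, h2⟩ := latt_surj M hM
      exact ⟨⟨⟨L, h1⟩, m, v⟩, Subtype.ext h2⟩)

theorem SubSum_prod (f : ℕ → ℝ≥0∞) :
    SubSum (G × Multiplicative ℤ) f =
      ∑' m : ℕ+, SubSum G (fun d => (d : ℝ≥0∞) * f (d * m)) := by
  unfold SubSum
  rw [← lattEquiv.tsum_eq]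
  have : ∀ z : (Σ L : {L : Subgroup G // L.index ≠ 0}, ℕ+ × (G ⧸ L.1)),
    (lattEquiv z).1.index = z.1.1.index * z.2.1 := fun z => latt_index _ _ _
  simp_rw [this]
  rw [ENNReal.tsum_sigma (f := fun (L : {L : Subgroup G // L.index ≠ 0}) (w : ℕ+ × (G ⧸ L.1)) =>
    f (L.1.index * w.1)), ENNReal.tsum_comm]
  refine tsum_congr fun L => ?_
  rw [ENNReal.tsum_prod (f := fun (m : ℕ+) (_ : G ⧸ L.1) => f (L.1.index * m))]
  refine tsum_congr fun m => ?_
  have hf : Finite (G ⧸ L.1) := (Subgroup.finiteIndex_iff_finite_quotient).1 ⟨L.2⟩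
  have := Fintype.ofFinite (G ⧸ L.1)
  rw [tsum_fintype, Finset.sum_const, Finset.card_univ, Subgroup.index, Nat.card_eq_fintype_card]
  simp

lemma SubSum_congr {G G' : Type*} [Group G] [Group G'] (e : G ≃* G') (f : ℕ → ℝ≥0∞) :
    SubSum G f = SubSum G' f := by
  unfold SubSum
  have h : ∀ L : Subgroup G, (e.mapSubgroup L).index = L.index := fun L => by
    simp
  rw [← (e.mapSubgroup.toEquiv.subtypeEquiv (p := fun L : Subgroup G => L.index ≠ 0)
    (q := fun L : Subgroup G' => L.index ≠ 0) (fun L => by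
      change _ ↔ (e.mapSubgroup L).index ≠ 0
      rw [h])).tsum_eq]
  refine tsum_congr fun L => ?_
  exact congrArg f (h L.1).symm

end KP

open Filter Topology Real MeasureTheory Asymptotics
open scoped ENNReal

namespace KP

noncomputable def DS (ℓ : ℕ) (f : ℕ → ℝ≥0∞) : ℝ≥0∞ :=
  ∑' δ : Fin ℓ → ℕ+, (∏ i, ((δ i : ℕ) : ℝ≥0∞) ^ (ℓ - 1 - (i : ℕ))) * f (∏ i, (δ i : ℕ))

lemma DS_succ (ℓ : ℕ) (f : ℕ → ℝ≥0∞) :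
    DS (ℓ + 1) f = ∑' m : ℕ+, DS ℓ (fun d => (d : ℝ≥0∞) * f (d * m)) := by
  unfold DS
  rw [← (Fin.snocEquiv (fun _ : Fin (ℓ + 1) => ℕ+)).tsum_eq,
    ← ENNReal.tsum_prod (f := fun (m : ℕ+) (δ : Fin ℓ → ℕ+) =>
      (∏ i, ((δ i : ℕ) : ℝ≥0∞) ^ (ℓ - 1 - (i : ℕ))) *
        (((∏ i, (δ i : ℕ) : ℕ) : ℝ≥0∞) * f ((∏ i, (δ i : ℕ)) * m)))]
  refine tsum_congr ?_
  rintro ⟨m, δ⟩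
  simp only [Fin.snocEquiv, Equiv.coe_fn_mk, Fin.prod_univ_castSucc, Fin.snoc_castSucc, Fin.snoc_last,
    Fin.val_castSucc, Fin.val_last, Nat.add_sub_cancel, Nat.sub_self, pow_zero, mul_one]
  rw [← mul_assoc]
  congr 1
  push_cast
  rw [← Finset.prod_mul_distrib]
  refine Finset.prod_congr rfl fun i _ => ?_
  rw [← pow_succ]
  congr 1
  omega

noncomputable def snocMul (ℓ : ℕ) :
    (Fin ℓ → Multiplicative ℤ) × Multiplicative ℤ ≃* (Fin (ℓ + 1) → Multiplicative ℤ) where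
  toFun z := Fin.snoc z.1 z.2
  invFun w := (fun i => w i.castSucc, w (Fin.last ℓ))
  left_inv z := by ext <;> simp
  right_inv w := by
    ext i
    refine Fin.lastCases ?_ (fun i => ?_) i <;> simp
  map_mul' z w := by
    ext i
    refine Fin.lastCases ?_ (fun i => ?_) i <;> simp

theorem SubSum_eq_DS (ℓ : ℕ) : ∀ f : ℕ → ℝ≥0∞, SubSum (Fin ℓ → Multiplicative ℤ) f = DS ℓ f := by
  induction ℓ with
  | zero =>
    intro f
    have hu : ∀ L : Subgroup (Fin 0 → Multiplicative ℤ), L.index = 1 := by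
      intro L
      rw [Subgroup.index_eq_one]
      ext g
      simp [Subsingleton.elim g 1]
    unfold SubSum DS
    have : Unique {L : Subgroup (Fin 0 → Multiplicative ℤ) // L.index ≠ 0} :=
      ⟨⟨⟨⊤, by simp⟩⟩, fun L => Subtype.ext (Subgroup.index_eq_one.1 (hu L.1))⟩
    rw [tsum_fintype, tsum_fintype]
    simp [hu]
  | succ ℓ ih =>
    intro f
    rw [← SubSum_congr (snocMul ℓ), SubSum_prod, DS_succ]
    exact tsum_congr fun m => ih _

noncomputable def tupEquiv1 (ℓ n : ℕ) :
    {σ : Fin ℓ → Equiv.Perm (Fin n) // ∀ i j, σ i * σ j = σ j * σ i} ≃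
      {φ : (i : Fin ℓ) → (Multiplicative ℤ →* Equiv.Perm (Fin n)) //
        Pairwise fun i j => ∀ (x y : Multiplicative ℤ), Commute (φ i x) (φ j y)} where
  toFun σ := ⟨fun i => zpowersHom _ (σ.1 i), fun i j _ a b => by
    have : Commute (σ.1 i) (σ.1 j) := σ.2 i j
    simp only [zpowersHom_apply]
    exact (this.zpow_zpow _ _)⟩
  invFun φ := ⟨fun i => (zpowersHom _).symm (φ.1 i), fun i j => by
    by_cases h : i = j
    · rw [h]
    · exact φ.2 h _ _⟩
  left_inv σ := by
    apply Subtype.ext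
    funext i
    exact (zpowersHom _).symm_apply_apply (σ.1 i)
  right_inv φ := by
    apply Subtype.ext
    funext i
    exact (zpowersHom _).apply_symm_apply (φ.1 i)

noncomputable def tupEquiv (ℓ n : ℕ) :
    {σ : Fin ℓ → Equiv.Perm (Fin n) // ∀ i j, σ i * σ j = σ j * σ i} ≃
      ((Fin ℓ → Multiplicative ℤ) →* Equiv.Perm (Fin n)) :=
  (tupEquiv1 ℓ n).trans (MonoidHom.noncommPiCoprodEquiv (N := fun _ : Fin ℓ => Multiplicative ℤ))

lemma tupEquiv_range (ℓ n : ℕ) (σ) :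
    (tupEquiv ℓ n σ).range = Subgroup.closure (Set.range σ.1) := by
  have h0 : (tupEquiv ℓ n σ).range = ⨆ i, (zpowersHom _ (σ.1 i)).range :=
    MonoidHom.noncommPiCoprod_range (H := fun _ : Fin ℓ => Multiplicative ℤ)
      (fun i => zpowersHom _ (σ.1 i)) (hcomm := (tupEquiv1 ℓ n σ).2)
  rw [h0]
  have : ∀ i, ((zpowersHom (Equiv.Perm (Fin n))) (σ.1 i)).range = Subgroup.zpowers (σ.1 i) := by
    intro i
    ext g
    simp only [MonoidHom.mem_range, Subgroup.mem_zpowers_iff, zpowersHom_apply]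
    exact ⟨fun ⟨k, hk⟩ => ⟨_, hk⟩, fun ⟨k, hk⟩ => ⟨Multiplicative.ofAdd k, hk⟩⟩
  apply le_antisymm
  · refine iSup_le fun i => ?_
    change ((zpowersHom (Equiv.Perm (Fin n))) (σ.1 i)).range ≤ _
    rw [this, Subgroup.zpowers_le]
    exact Subgroup.subset_closure ⟨i, rfl⟩
  · rw [Subgroup.closure_le]
    rintro _ ⟨i, rfl⟩
    have h1 : σ.1 i ∈ ((zpowersHom (Equiv.Perm (Fin n))) (σ.1 i)).range := by
      rw [this]; exact Subgroup.mem_zpowers _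
    exact (le_iSup (fun i => ((zpowersHom (Equiv.Perm (Fin n))) (σ.1 i)).range) i) h1

lemma orb_eq {G X : Type*} [Group G] (φ : G →* Equiv.Perm X) :
    orb φ = Nat.card (MulAction.orbitRel.Quotient φ.range X) := by
  refine Nat.card_congr (Quotient.congr (Equiv.refl _) ?_)
  intro a b
  change (∃ g, φ g a = b) ↔ a ∈ MulAction.orbit φ.range b
  rw [MulAction.mem_orbit_symm]
  constructor
  · rintro ⟨g, h⟩
    exact ⟨⟨φ g, g, rfl⟩, h⟩
  · rintro ⟨⟨_, g, rfl⟩, h⟩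
    exact ⟨g, h⟩

lemma kappa_eq (ℓ n : ℕ) (σ) : kappa (ℓ := ℓ) (n := n) σ.1 = orb (tupEquiv ℓ n σ) := by
  rw [orb_eq, tupEquiv_range]; rfl

lemma kappa_le (ℓ n : ℕ) (σ) : kappa (ℓ := ℓ) (n := n) σ ≤ n := by
  unfold kappa
  have := Nat.card_le_card_of_surjective (Quotient.mk (MulAction.orbitRel (Subgroup.closure (Set.range σ)) (Fin n))) Quotient.mk_surjective
  simpa using this

open Classical in
lemma sum_Acount (ℓ n : ℕ) (x : ℝ) :
    ∑ k ∈ Finset.range (n + 1), (Acount ℓ n k : ℝ) * x ^ k =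
      ∑ σ : {σ : Fin ℓ → Equiv.Perm (Fin n) // ∀ i j, σ i * σ j = σ j * σ i}, x ^ kappa σ.1 := by
  rw [← Finset.sum_fiberwise_of_maps_to (s := Finset.univ) (t := Finset.range (n + 1))
    (g := fun σ : {σ : Fin ℓ → Equiv.Perm (Fin n) // ∀ i j, σ i * σ j = σ j * σ i} => kappa σ.1)
    (fun σ _ => Finset.mem_range.2 (Nat.lt_succ_of_le (kappa_le ℓ n σ.1)))]
  refine Finset.sum_congr rfl fun k _ => ?_
  rw [Finset.sum_congr rfl (g := fun _ => x ^ k) (fun σ hσ => by rw [(Finset.mem_filter.1 hσ).2]),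
    Finset.sum_const, nsmul_eq_mul]
  congr 2
  unfold Acount
  rw [← Fintype.card_subtype, ← Nat.card_eq_fintype_card]
  exact Nat.card_congr (Equiv.subtypeSubtypeEquivSubtypeInter _ (fun σ => kappa σ = k)).symm

theorem RR_eq (ℓ n : ℕ) (x : ℝ) (hx : 0 ≤ x) :
    RR (Fin ℓ → Multiplicative ℤ) (Fin n) (ENNReal.ofReal x) =
      ENNReal.ofReal (n.factorial * Hpoly ℓ n x) := by
  classical
  have : (n.factorial : ℝ) ≠ 0 := by positivity
  rw [Hpoly, ← mul_assoc, mul_one_div_cancel this, one_mul, sum_Acount,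
    ENNReal.ofReal_sum_of_nonneg (fun _ _ => by positivity)]
  unfold RR
  rw [← (tupEquiv ℓ n).tsum_eq, tsum_fintype]
  refine Finset.sum_congr rfl fun σ _ => ?_
  rw [← kappa_eq, ENNReal.ofReal_pow hx]

lemma Hpoly_zero (ℓ : ℕ) (x : ℝ) : Hpoly ℓ 0 x = 1 := by
  classical
  have hk : ∀ σ : Fin ℓ → Equiv.Perm (Fin 0), kappa σ = 0 := fun σ => Nat.le_zero.1 (kappa_le ℓ 0 σ)
  rw [Hpoly, sum_Acount]
  simp only [hk]
  simp
  rw [Fintype.card_eq_one_iff_nonempty_unique]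
  exact ⟨⟨⟨fun _ => 1, by simp⟩⟩, fun a => Subsingleton.elim _ _⟩

/-- Key recurrence in ENNReal form. -/
theorem Hrec (ℓ n : ℕ) (x : ℝ) (hx : 0 ≤ x) :
    (n : ℝ≥0∞) * ENNReal.ofReal (n.factorial * Hpoly ℓ n x) =
      ENNReal.ofReal x * DS ℓ (fun N => (n.descFactorial N : ℝ≥0∞) *
        ENNReal.ofReal ((n - N).factorial * Hpoly ℓ (n - N) x)) := by
  have := RR_rec (Fin ℓ → Multiplicative ℤ) n (ENNReal.ofReal x)
  simp_rw [RR_eq ℓ _ x hx, SubSum_eq_DS] at this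
  exact this

end KP

open Filter Topology Real MeasureTheory Asymptotics
open scoped ENNReal

namespace KP

lemma S_bounds (p : ℕ) (t : ℝ) (ht : 0 < t) :
    Summable (fun n : ℕ => ((n : ℝ) + 1) ^ p * Real.exp (-((n : ℝ) + 1) * t)) ∧
    (p.factorial : ℝ) * (Real.exp (-t) ^ (p + 1) / (1 - Real.exp (-t)) ^ (p + 1)) ≤
      ∑' n : ℕ, ((n : ℝ) + 1) ^ p * Real.exp (-((n : ℝ) + 1) * t) ∧
    ∑' n : ℕ, ((n : ℝ) + 1) ^ p * Real.exp (-((n : ℝ) + 1) * t) ≤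
      (p.factorial : ℝ) * (Real.exp (-t) / (1 - Real.exp (-t)) ^ (p + 1)) := by
  set r := Real.exp (-t) with hr
  have hr0 : 0 < r := Real.exp_pos _
  have hr1 : r < 1 := by rw [hr]; simpa using ht
  have hrn : ‖r‖ < 1 := by rw [Real.norm_of_nonneg hr0.le]; exact hr1
  have he : ∀ n : ℕ, Real.exp (-((n : ℝ) + 1) * t) = r ^ (n + 1) := by
    intro n
    rw [hr, ← Real.exp_nat_mul]
    congr 1
    push_cast; ring
  simp_rw [he]
  have hs := summable_choose_mul_geometric_of_norm_lt_one p hrn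
  have ht' := tsum_choose_mul_geometric_of_norm_lt_one p hrn
  have hup : ∀ n : ℕ, ((n : ℝ) + 1) ^ p * r ^ (n + 1) ≤
      (p.factorial : ℝ) * r * (((n + p).choose p : ℝ) * r ^ n) := by
    intro n
    have h1 : (n + 1) ^ p ≤ p.factorial * (n + p).choose p := by
      rw [← Nat.ascFactorial_eq_factorial_mul_choose]
      exact Nat.pow_succ_le_ascFactorial (n + 1) p
    have h2 : ((n : ℝ) + 1) ^ p ≤ p.factorial * (n + p).choose p := by exact_mod_cast h1
    calc ((n : ℝ) + 1) ^ p * r ^ (n + 1) ≤ (p.factorial * (n + p).choose p) * r ^ (n + 1) := by gcongr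
      _ = _ := by ring
  have hS : Summable (fun n : ℕ => ((n : ℝ) + 1) ^ p * r ^ (n + 1)) :=
    Summable.of_nonneg_of_le (fun n => by positivity) hup (hs.mul_left _)
  refine ⟨hS, ?_, ?_⟩
  · have h1 : ∑' j : ℕ, (((j + p : ℕ) : ℝ) + 1) ^ p * r ^ (j + p + 1) ≤
        ∑' n : ℕ, ((n : ℝ) + 1) ^ p * r ^ (n + 1) := by
      rw [← hS.sum_add_tsum_nat_add p]
      have : 0 ≤ ∑ i ∈ Finset.range p, ((i : ℝ) + 1) ^ p * r ^ (i + 1) :=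
        Finset.sum_nonneg fun i _ => by positivity
      linarith
    refine le_trans ?_ h1
    have h2 : (p.factorial : ℝ) * (r ^ (p + 1) / (1 - r) ^ (p + 1)) =
        ∑' j : ℕ, (p.factorial : ℝ) * r ^ (p + 1) * (((j + p).choose p : ℝ) * r ^ j) := by
      rw [tsum_mul_left, ht']; ring
    rw [h2]
    refine Summable.tsum_le_tsum ?_ (hs.mul_left _) ((summable_nat_add_iff p).2 hS)
    intro j
    have h3 : p.factorial * (j + p).choose p ≤ (j + p) ^ p := by
      rw [← Nat.descFactorial_eq_factorial_mul_choose]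
      exact Nat.descFactorial_le_pow _ _
    have h4 : (p.factorial : ℝ) * (j + p).choose p ≤ (((j + p : ℕ) : ℝ) + 1) ^ p := by
      have h5 : (p.factorial : ℝ) * (j + p).choose p ≤ ((j + p : ℕ) : ℝ) ^ p := by exact_mod_cast h3
      refine h5.trans ?_
      gcongr
      linarith
    calc (p.factorial : ℝ) * r ^ (p + 1) * (((j + p).choose p : ℝ) * r ^ j)
        = ((p.factorial : ℝ) * (j + p).choose p) * r ^ (j + p + 1) := by ring
      _ ≤ _ := by gcongr
  · have h2 : (p.factorial : ℝ) * (r / (1 - r) ^ (p + 1)) =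
        ∑' j : ℕ, (p.factorial : ℝ) * r * (((j + p).choose p : ℝ) * r ^ j) := by
      rw [tsum_mul_left, ht']; ring
    rw [h2]
    exact Summable.tsum_le_tsum hup hS (hs.mul_left _)

noncomputable def gbase (p : ℕ) (t : ℝ) : ℝ :=
  t ^ (p + 1) * ∑' n : ℕ, ((n : ℝ) + 1) ^ p * Real.exp (-((n : ℝ) + 1) * t)

lemma gbase_bound (p : ℕ) (t : ℝ) (ht : 0 < t) :
    gbase p t ≤ p.factorial * ((p + 1).factorial * Real.exp 1) := by
  obtain ⟨-, -, h⟩ := S_bounds p t ht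
  unfold gbase
  set r := Real.exp (-t) with hr
  have hr0 : 0 < r := Real.exp_pos _
  have hr1 : r < 1 := by rw [hr]; simpa using ht
  have h1 : t ≤ (1 + t) * (1 - r) := by
    have : r ≤ 1 / (1 + t) := by
      rw [hr, Real.exp_neg, inv_eq_one_div]
      apply one_div_le_one_div_of_le (by linarith)
      linarith [Real.add_one_le_exp t]
    rw [le_div_iff₀ (by linarith)] at this
    nlinarith
  have h2 : t ^ (p + 1) ≤ (1 + t) ^ (p + 1) * (1 - r) ^ (p + 1) := by
    rw [← mul_pow]; gcongr
  have h3 : (1 + t) ^ (p + 1) ≤ (p + 1).factorial * Real.exp (1 + t) := by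
    have := Real.pow_div_factorial_le_exp (1 + t) (by linarith) (p + 1)
    rw [div_le_iff₀ (by positivity)] at this
    linarith
  have h1r : 0 < 1 - r := by linarith
  calc t ^ (p + 1) * _ ≤ t ^ (p + 1) * ((p.factorial : ℝ) * (r / (1 - r) ^ (p + 1))) := by gcongr
    _ ≤ ((1 + t) ^ (p + 1) * (1 - r) ^ (p + 1)) * ((p.factorial : ℝ) * (r / (1 - r) ^ (p + 1))) := by
        gcongr
    _ = p.factorial * ((1 + t) ^ (p + 1) * r) := by field_simp
    _ ≤ p.factorial * (((p + 1).factorial * Real.exp (1 + t)) * r) := by gcongr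
    _ = p.factorial * ((p + 1).factorial * Real.exp 1) := by
        rw [mul_assoc, hr, ← Real.exp_add]; simp

lemma gbase_tendsto (p : ℕ) : Tendsto (gbase p) (𝓝[>] 0) (𝓝 p.factorial) := by
  have hq : Tendsto (fun t : ℝ => t / (1 - Real.exp (-t))) (𝓝[>] 0) (𝓝 1) := by
    have h : HasDerivAt (fun t : ℝ => 1 - Real.exp (-t)) 1 0 := by
      have := ((hasDerivAt_neg (0 : ℝ)).exp).const_sub 1
      simpa using this
    have h2 := h.tendsto_slope_zero_right
    have h3 := h2.inv₀ one_ne_zero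
    simp only [inv_one] at h3
    refine h3.congr' ?_
    filter_upwards with t
    simp [div_eq_mul_inv, mul_comm]
  have hr : Tendsto (fun t : ℝ => Real.exp (-t)) (𝓝[>] 0) (𝓝 1) := by
    have : Continuous (fun t : ℝ => Real.exp (-t)) := by fun_prop
    have h := this.tendsto 0
    simp only [neg_zero, Real.exp_zero] at h
    exact h.mono_left nhdsWithin_le_nhds
  have hl : Tendsto (fun t : ℝ => (p.factorial : ℝ) * (Real.exp (-t) ^ (p + 1) * (t / (1 - Real.exp (-t))) ^ (p + 1)))
      (𝓝[>] 0) (𝓝 p.factorial) := by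
    have := ((hr.pow (p + 1)).mul (hq.pow (p + 1))).const_mul (p.factorial : ℝ)
    simpa using this
  have hu : Tendsto (fun t : ℝ => (p.factorial : ℝ) * (Real.exp (-t) * (t / (1 - Real.exp (-t))) ^ (p + 1)))
      (𝓝[>] 0) (𝓝 p.factorial) := by
    have := (hr.mul (hq.pow (p + 1))).const_mul (p.factorial : ℝ)
    simpa using this
  refine tendsto_of_tendsto_of_tendsto_of_le_of_le' hl hu ?_ ?_
  · filter_upwards [self_mem_nhdsWithin] with t ht
    obtain ⟨-, h, -⟩ := S_bounds p t ht
    have ht0 : (0 : ℝ) < t := ht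
    calc _ = t ^ (p + 1) * ((p.factorial : ℝ) * (Real.exp (-t) ^ (p + 1) / (1 - Real.exp (-t)) ^ (p + 1))) := by
          rw [div_pow]; ring
      _ ≤ _ := by unfold gbase; gcongr
  · filter_upwards [self_mem_nhdsWithin] with t ht
    obtain ⟨-, -, h⟩ := S_bounds p t ht
    have ht0 : (0 : ℝ) < t := ht
    calc gbase p t ≤ t ^ (p + 1) * ((p.factorial : ℝ) * (Real.exp (-t) / (1 - Real.exp (-t)) ^ (p + 1))) := by
          unfold gbase; gcongr
      _ = _ := by rw [div_pow]; ring

noncomputable def Zf (ℓ m : ℕ) (t : ℝ) : ℝ≥0∞ :=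
  DS ℓ (fun N => ENNReal.ofReal ((N : ℝ) ^ ((m : ℤ) - ℓ) * Real.exp (-N * t)))

lemma DS_congr (ℓ : ℕ) (f f' : ℕ → ℝ≥0∞) (h : ∀ N, N ≠ 0 → f N = f' N) : DS ℓ f = DS ℓ f' := by
  unfold DS
  refine tsum_congr fun δ => ?_
  rw [h]
  exact Finset.prod_ne_zero_iff.2 fun i _ => (δ i).ne_zero

lemma DS_const_mul (ℓ : ℕ) (f : ℕ → ℝ≥0∞) (a : ℝ≥0∞) : DS ℓ (fun N => a * f N) = a * DS ℓ f := by
  unfold DS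
  rw [← ENNReal.tsum_mul_left]
  refine tsum_congr fun δ => ?_
  ring

lemma Zf_one (p : ℕ) (t : ℝ) (ht : 0 < t) :
    Zf 1 (p + 1) t = ENNReal.ofReal (gbase p t / t ^ (p + 1)) := by
  obtain ⟨hs, -, -⟩ := S_bounds p t ht
  have : gbase p t / t ^ (p + 1) = ∑' n : ℕ, ((n : ℝ) + 1) ^ p * Real.exp (-((n : ℝ) + 1) * t) := by
    unfold gbase
    rw [mul_div_cancel_left₀]
    positivity
  rw [this, ENNReal.ofReal_tsum_of_nonneg (fun n => by positivity) hs]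
  unfold Zf DS
  rw [← (Equiv.funUnique (Fin 1) ℕ+).symm.tsum_eq, ← Equiv.pnatEquivNat.symm.tsum_eq]
  refine tsum_congr fun n => ?_
  simp

lemma Zf_succ (ℓ m : ℕ) (t : ℝ) :
    Zf (ℓ + 1) m t = ∑' k : ℕ+, ENNReal.ofReal ((k : ℝ) ^ ((m : ℤ) - (ℓ + 1))) * Zf ℓ m (k * t) := by
  unfold Zf
  rw [DS_succ]
  refine tsum_congr fun k => ?_
  rw [← DS_const_mul]
  refine DS_congr _ _ _ fun N hN => ?_
  have hN' : (N : ℝ) ≠ 0 := by exact_mod_cast hN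
  rw [← ENNReal.ofReal_natCast N, ← ENNReal.ofReal_mul (by positivity), ← ENNReal.ofReal_mul (by positivity)]
  congr 1
  push_cast
  have h1 : (N : ℝ) ^ ((m : ℤ) - ℓ) = N * (N : ℝ) ^ ((m : ℤ) - (ℓ + 1)) := by
    rw [← zpow_one_add₀ hN']; congr 1; ring
  rw [h1, mul_zpow]
  have : -((N : ℝ) * k) * t = - N * (k * t) := by ring
  rw [this]; ring

lemma zeta_summable (ℓ : ℕ) (hℓ : 2 ≤ ℓ) : Summable (fun k : ℕ+ => 1 / ((k : ℕ) : ℝ) ^ ℓ) := by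
  have : Summable (fun k : ℕ => 1 / (k : ℝ) ^ ℓ) := Real.summable_one_div_nat_pow.2 (by omega)
  exact this.comp_injective PNat.coe_injective

lemma zetaR_eq (ℓ : ℕ) : zetaR (ℓ : ℝ) = ∑' k : ℕ+, 1 / ((k : ℕ) : ℝ) ^ ℓ := by
  unfold zetaR
  rw [← Equiv.pnatEquivNat.symm.tsum_eq]
  refine tsum_congr fun n => ?_
  rw [Real.rpow_natCast]
  simp

theorem Zf_asymp (p ℓ : ℕ) (hℓ : 1 ≤ ℓ) : ∃ (g : ℝ → ℝ) (C : ℝ),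
    (∀ t, 0 < t → 0 ≤ g t ∧ g t ≤ C ∧ Zf ℓ (p + 1) t = ENNReal.ofReal (g t / t ^ (p + 1))) ∧
    Tendsto g (𝓝[>] 0) (𝓝 ((p.factorial : ℝ) * ∏ j ∈ Finset.Icc 2 ℓ, zetaR (j : ℝ))) := by
  induction ℓ, hℓ using Nat.le_induction with
  | base =>
    refine ⟨gbase p, _, fun t ht => ⟨?_, gbase_bound p t ht, Zf_one p t ht⟩, ?_⟩
    · unfold gbase
      exact mul_nonneg (by positivity) (tsum_nonneg fun n => by positivity)
    · simpa using gbase_tendsto p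
  | succ ℓ hℓ ih =>
    obtain ⟨g, C, h, hlim⟩ := ih
    have hz := zeta_summable (ℓ + 1) (by omega)
    have hkt : ∀ (k : ℕ+) (t : ℝ), 0 < t → 0 < ((k : ℕ) : ℝ) * t := fun k t ht =>
      mul_pos (by exact_mod_cast k.pos) ht
    have hle : ∀ (k : ℕ+) (t : ℝ), 0 < t →
      1 / ((k : ℕ) : ℝ) ^ (ℓ + 1) * g (k * t) ≤ C * (1 / ((k : ℕ) : ℝ) ^ (ℓ + 1)) := by
      intro k t ht
      rw [mul_comm]
      exact mul_le_mul_of_nonneg_right (h _ (hkt k t ht)).2.1 (by positivity)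
    have hnn : ∀ (k : ℕ+) (t : ℝ), 0 < t → 0 ≤ 1 / ((k : ℕ) : ℝ) ^ (ℓ + 1) * g (k * t) :=
      fun k t ht => mul_nonneg (by positivity) (h _ (hkt k t ht)).1
    have hsum : ∀ t, 0 < t → Summable (fun k : ℕ+ => 1 / ((k : ℕ) : ℝ) ^ (ℓ + 1) * g (k * t)) :=
      fun t ht => Summable.of_nonneg_of_le (fun k => hnn k t ht) (fun k => hle k t ht) (hz.mul_left C)
    refine ⟨fun t => ∑' k : ℕ+, 1 / ((k : ℕ) : ℝ) ^ (ℓ + 1) * g (k * t),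
      ∑' k : ℕ+, C * (1 / ((k : ℕ) : ℝ) ^ (ℓ + 1)), fun t ht => ⟨tsum_nonneg fun k => hnn k t ht, ?_, ?_⟩, ?_⟩
    · exact Summable.tsum_le_tsum (fun k => hle k t ht) (hsum t ht) (hz.mul_left C)
    · rw [Zf_succ, ← tsum_div_const, ENNReal.ofReal_tsum_of_nonneg
        (fun k => div_nonneg (hnn k t ht) (by positivity)) ((hsum t ht).div_const _)]
      refine tsum_congr fun k => ?_
      rw [(h _ (hkt k t ht)).2.2, ← ENNReal.ofReal_mul (by positivity)]
      congr 1
      have hk : ((k : ℕ) : ℝ) ≠ 0 := by exact_mod_cast k.ne_zero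
      rw [zpow_sub₀ hk, mul_pow]
      have : ((k : ℕ) : ℝ) ^ ((ℓ : ℤ) + 1) = ((k : ℕ) : ℝ) ^ (ℓ + 1) := by
        rw [← zpow_natCast]; push_cast; rfl
      rw [this, zpow_natCast]
      field_simp
    · have hI : Finset.Icc 2 (ℓ + 1) = insert (ℓ + 1) (Finset.Icc 2 ℓ) := by
        ext a; simp only [Finset.mem_Icc, Finset.mem_insert]; omega
      rw [hI, Finset.prod_insert (by simp), zetaR_eq, mul_left_comm, ← tsum_mul_right]
      refine tendsto_tsum_of_dominated_convergence (hz.mul_left C) ?_ ?_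
      · intro k
        refine Tendsto.const_mul _ (hlim.comp ?_)
        have hc : Continuous (fun t : ℝ => ((k : ℕ) : ℝ) * t) := by fun_prop
        have := hc.tendsto 0
        rw [mul_zero] at this
        refine tendsto_nhdsWithin_iff.2 ⟨this.mono_left nhdsWithin_le_nhds, ?_⟩
        filter_upwards [self_mem_nhdsWithin] with t ht using hkt k t ht
      · filter_upwards [self_mem_nhdsWithin] with t ht k
        rw [Real.norm_of_nonneg (hnn k t ht)]
        exact hle k t ht

/-- The coefficients. -/
noncomputable def cc (ℓ N : ℕ) : ℝ := (DS ℓ (Pi.single N 1)).toReal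

lemma DS_eq_tsum (ℓ : ℕ) (f : ℕ → ℝ≥0∞) : DS ℓ f = ∑' N, DS ℓ (Pi.single N 1) * f N := by
  unfold DS
  simp_rw [← ENNReal.tsum_mul_right]
  rw [ENNReal.tsum_comm]
  refine tsum_congr fun δ => ?_
  rw [tsum_eq_single (∏ i, (δ i : ℕ))]
  · simp
  · intro N hN
    rw [Pi.single_eq_of_ne hN.symm]; simp

lemma cc_ofReal (ℓ N : ℕ) (hℓ : 1 ≤ ℓ) : ENNReal.ofReal (cc ℓ N) = DS ℓ (Pi.single N 1) := by
  unfold cc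
  refine ENNReal.ofReal_toReal fun htop => ?_
  rcases Nat.eq_zero_or_pos N with h0 | h0
  · have : DS ℓ (Pi.single N 1) = 0 := by
      rw [DS_congr ℓ _ (fun _ => 0 * 0)]
      · rw [DS_const_mul]; simp
      · intro M hM; rw [h0, Pi.single_eq_of_ne hM]; simp
    rw [this] at htop; simp at htop
  obtain ⟨g, C, h, -⟩ := Zf_asymp 0 ℓ hℓ
  have h1 := (h 1 one_pos).2.2
  unfold Zf at h1
  rw [DS_eq_tsum] at h1
  have h2 := ENNReal.le_tsum (f := fun N => DS ℓ (Pi.single N 1) *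
    ENNReal.ofReal ((N : ℝ) ^ (((0 + 1 : ℕ) : ℤ) - ℓ) * Real.exp (-N * 1))) N
  rw [h1, htop, ENNReal.top_mul] at h2
  · simp at h2
  · simp; positivity

lemma cc_nonneg (ℓ N : ℕ) : 0 ≤ cc ℓ N := ENNReal.toReal_nonneg

lemma cc_zero (ℓ : ℕ) : cc ℓ 0 = 0 := by
  have : DS ℓ (Pi.single 0 1) = 0 := by
    rw [DS_congr ℓ _ (fun _ => 0 * 0)]
    · rw [DS_const_mul]; simp
    · intro M hM; rw [Pi.single_eq_of_ne hM]; simp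
  simp [cc, this]

lemma cc_ge (ℓ N : ℕ) (hℓ : 1 ≤ ℓ) (hN : 1 ≤ N) : (N : ℝ) ^ (ℓ - 1) ≤ cc ℓ N := by
  have h := cc_ofReal ℓ N hℓ
  rw [← ENNReal.ofReal_le_ofReal_iff (cc_nonneg _ _), h]
  obtain ⟨k, rfl⟩ : ∃ k, ℓ = k + 1 := ⟨ℓ - 1, by omega⟩
  unfold DS
  obtain ⟨δ, h0, hs⟩ : ∃ δ : Fin (k + 1) → ℕ+, (δ 0 : ℕ) = N ∧ ∀ i : Fin k, δ i.succ = 1 :=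
    ⟨Fin.cons (⟨N, hN⟩ : ℕ+) (fun _ => 1), rfl, fun i => rfl⟩
  refine le_trans (le_of_eq ?_) (ENNReal.le_tsum δ)
  simp [Fin.prod_univ_succ, ENNReal.ofReal_pow, h0, hs]

theorem DS_real (ℓ : ℕ) (hℓ : 1 ≤ ℓ) (f : ℕ → ℝ≥0∞) :
    DS ℓ f = ∑' N, ENNReal.ofReal (cc ℓ N) * f N := by
  rw [DS_eq_tsum]
  simp_rw [cc_ofReal ℓ _ hℓ]

lemma Zstair_eq (ℓ m : ℕ) (t : ℝ) : Zstair ℓ m t = (Zf ℓ m t).toReal := by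
  unfold Zstair Zr Zf DS
  rw [ENNReal.tsum_toReal_eq]
  · refine tsum_congr fun δ => ?_
    rw [ENNReal.toReal_mul, ENNReal.toReal_ofReal (by positivity), ENNReal.toReal_prod, ← mul_assoc]
    congr 1
    · push_cast
      rw [← Finset.prod_zpow, ← Finset.prod_mul_distrib]
      refine Finset.prod_congr rfl fun i _ => ?_
      have hk : ((δ i : ℕ) : ℝ) ≠ 0 := by exact_mod_cast (δ i).ne_zero
      rw [ENNReal.toReal_pow, ENNReal.toReal_natCast, ← zpow_natCast, ← zpow_add₀ hk, ← Real.rpow_intCast]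
      congr 1
      have : (ℓ - 1 - (i : ℕ) : ℕ) = (ℓ : ℤ) - 1 - (i : ℕ) := by omega
      rw [this]; push_cast; ring
    · push_cast; rfl
  · intro δ
    refine ENNReal.mul_ne_top (ENNReal.prod_ne_top fun i _ => ?_) ENNReal.ofReal_ne_top
    exact ENNReal.pow_ne_top (ENNReal.natCast_ne_top _)

end KP

open Filter Topology Real MeasureTheory Asymptotics
open scoped ENNReal

namespace KP

noncomputable def dd (ℓ N : ℕ) : ℝ := cc ℓ N / N

noncomputable def MM (d : ℕ → ℝ) (k : ℕ) (t : ℝ) : ℝ := ∑' N : ℕ, d N * (N : ℝ) ^ k * Real.exp (-N * t)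

lemma dd_zero (ℓ : ℕ) : dd ℓ 0 = 0 := by simp [dd]
lemma dd_nonneg (ℓ N : ℕ) : 0 ≤ dd ℓ N := div_nonneg (cc_nonneg _ _) (by positivity)
lemma dd_ge (ℓ N : ℕ) (hℓ : 2 ≤ ℓ) (hN : 1 ≤ N) : 1 ≤ dd ℓ N := by
  unfold dd
  have hN' : (1 : ℝ) ≤ N := by exact_mod_cast hN
  rw [le_div_iff₀ (by linarith), one_mul]
  refine le_trans ?_ (cc_ge ℓ N (by omega) hN)
  exact le_self_pow₀ hN' (by omega)

lemma Zf_dd (q k : ℕ) (t : ℝ) : Zf (q + 2) (q + k + 1) t =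
    ∑' N : ℕ, ENNReal.ofReal (dd (q + 2) N * (N : ℝ) ^ k * Real.exp (-N * t)) := by
  unfold Zf
  rw [DS_real _ (by omega)]
  refine tsum_congr fun N => ?_
  rw [← ENNReal.ofReal_mul (cc_nonneg _ _)]
  congr 1
  rcases Nat.eq_zero_or_pos N with h | h
  · subst h; simp [cc_zero, dd_zero]
  · have hN : (N : ℝ) ≠ 0 := by positivity
    have : ((q + k + 1 : ℕ) : ℤ) - ((q + 2 : ℕ) : ℤ) = (k : ℤ) - 1 := by push_cast; ring
    rw [this, zpow_sub₀ hN, zpow_natCast, zpow_one]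
    unfold dd
    field_simp

lemma dd_term_nonneg (ℓ k N : ℕ) (t : ℝ) : 0 ≤ dd ℓ N * (N : ℝ) ^ k * Real.exp (-N * t) :=
  mul_nonneg (mul_nonneg (dd_nonneg _ _) (by positivity)) (Real.exp_pos _).le

lemma dd_summable (q k : ℕ) (t : ℝ) (ht : 0 < t) :
    Summable (fun N : ℕ => dd (q + 2) N * (N : ℝ) ^ k * Real.exp (-N * t)) := by
  obtain ⟨g, C, h, -⟩ := Zf_asymp (q + k) (q + 2) (by omega)
  have h1 := (h t ht).2.2
  rw [Zf_dd] at h1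
  have h2 := ENNReal.summable_toReal (f := fun N : ℕ => ENNReal.ofReal (dd (q + 2) N * (N : ℝ) ^ k * Real.exp (-N * t)))
    (by rw [h1]; exact ENNReal.ofReal_ne_top)
  refine h2.congr fun N => ?_
  rw [ENNReal.toReal_ofReal (dd_term_nonneg _ _ _ _)]

lemma Zf_MM (q k : ℕ) (t : ℝ) (ht : 0 < t) :
    Zf (q + 2) (q + k + 1) t = ENNReal.ofReal (MM (dd (q + 2)) k t) := by
  rw [Zf_dd, MM, ENNReal.ofReal_tsum_of_nonneg (fun N => dd_term_nonneg _ _ _ _) (dd_summable q k t ht)]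

lemma MM_nonneg (q k : ℕ) (t : ℝ) : 0 ≤ MM (dd (q + 2)) k t := tsum_nonneg fun _ => dd_term_nonneg _ _ _ _

theorem MM_asymp (q k : ℕ) :
    (∃ C, ∀ t, 0 < t → t ^ (q + k + 1) * MM (dd (q + 2)) k t ≤ C) ∧
    Tendsto (fun t => t ^ (q + k + 1) * MM (dd (q + 2)) k t) (𝓝[>] 0)
      (𝓝 (((q + k).factorial : ℝ) * ∏ j ∈ Finset.Icc 2 (q + 2), zetaR (j : ℝ))) := by
  obtain ⟨g, C, h, hl⟩ := Zf_asymp (q + k) (q + 2) (by omega)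
  have key : ∀ t, 0 < t → t ^ (q + k + 1) * MM (dd (q + 2)) k t = g t := by
    intro t ht
    have h1 := (h t ht).2.2
    rw [Zf_MM _ _ _ ht, ENNReal.ofReal_eq_ofReal_iff (MM_nonneg _ _ _)
      (div_nonneg (h t ht).1 (by positivity))] at h1
    rw [h1]; field_simp
  refine ⟨⟨C, fun t ht => ?_⟩, ?_⟩
  · rw [key t ht]; exact (h t ht).2.1
  · refine hl.congr' ?_
    filter_upwards [self_mem_nhdsWithin] with t ht using (key t ht).symm

lemma Zstair_MM (q k : ℕ) (t : ℝ) (ht : 0 < t) :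
    Zstair (q + 2) ((q + k + 1 : ℕ) : ℤ) t = MM (dd (q + 2)) k t := by
  rw [Zstair_eq, Zf_MM _ _ _ ht, ENNReal.toReal_ofReal (MM_nonneg _ _ _)]

lemma Hpoly_nonneg (ℓ n : ℕ) (x : ℝ) (hx : 0 ≤ x) : 0 ≤ Hpoly ℓ n x := by
  unfold Hpoly
  exact mul_nonneg (by positivity) (Finset.sum_nonneg fun k _ => by positivity)

theorem Hrec_real (ℓ n : ℕ) (hℓ : 1 ≤ ℓ) (x : ℝ) (hx : 0 ≤ x) :
    ((n : ℝ) + 1) * Hpoly ℓ (n + 1) x =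
      x * ∑ i ∈ Finset.range (n + 1), cc ℓ (i + 1) * Hpoly ℓ (n - i) x := by
  have h := Hrec ℓ (n + 1) x hx
  rw [DS_real ℓ hℓ, tsum_eq_sum (s := Finset.range (n + 2)) (by
    intro N hN
    rw [Finset.mem_range, not_lt] at hN
    rw [Nat.descFactorial_of_lt (by omega)]; simp)] at h
  rw [Finset.sum_range_succ', cc_zero] at h
  simp only [ENNReal.ofReal_zero, zero_mul, add_zero] at h
  have h2 : ∀ i ∈ Finset.range (n + 1), ENNReal.ofReal (cc ℓ (i + 1)) * (((n + 1).descFactorial (i + 1) : ℝ≥0∞) *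
      ENNReal.ofReal ((n + 1 - (i + 1)).factorial * Hpoly ℓ (n + 1 - (i + 1)) x)) =
      ENNReal.ofReal ((n + 1).factorial * (cc ℓ (i + 1) * Hpoly ℓ (n - i) x)) := by
    intro i hi
    rw [Finset.mem_range] at hi
    rw [← ENNReal.ofReal_natCast ((n + 1).descFactorial (i + 1)), ← ENNReal.ofReal_mul (by positivity),
      ← ENNReal.ofReal_mul (cc_nonneg _ _), Nat.add_sub_add_right]
    congr 1
    have h3 : (n - i).factorial * (n + 1).descFactorial (i + 1) = (n + 1).factorial := by
      have := Nat.factorial_mul_descFactorial (n := n + 1) (k := i + 1) (by omega)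
      rwa [Nat.add_sub_add_right] at this
    rw [← h3]; push_cast; ring
  rw [Finset.sum_congr rfl h2, ← ENNReal.ofReal_sum_of_nonneg, ← ENNReal.ofReal_mul hx,
    ← ENNReal.ofReal_natCast (n + 1), ← ENNReal.ofReal_mul (by positivity),
    ENNReal.ofReal_eq_ofReal_iff, ← Finset.mul_sum] at h
  · have hf : ((n + 1).factorial : ℝ) ≠ 0 := by positivity
    apply mul_left_cancel₀ hf
    push_cast at h ⊢
    linarith
  · have := Hpoly_nonneg ℓ (n + 1) x hx
    positivity
  · refine mul_nonneg hx (Finset.sum_nonneg fun i _ => ?_)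
    have := Hpoly_nonneg ℓ (n - i) x hx
    have := cc_nonneg ℓ (i + 1)
    positivity
  · intro i _
    have := Hpoly_nonneg ℓ (n - i) x hx
    have := cc_nonneg ℓ (i + 1)
    positivity

end KP

open Filter Topology Real MeasureTheory Asymptotics
open scoped ENNReal
namespace KP

noncomputable def FF (q : ℕ) (z : ℂ) : ℂ := ∑' N : ℕ, (dd (q + 2) N : ℂ) * z ^ N

lemma FF_ps (q : ℕ) : HasFPowerSeriesOnBall (FF q)
    (FormalMultilinearSeries.ofScalars ℂ (fun N => (dd (q + 2) N : ℂ))) 0 1 := by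
  have hr : (1 : ℝ≥0∞) ≤ (FormalMultilinearSeries.ofScalars ℂ (fun N => (dd (q + 2) N : ℂ))).radius := by
    refine ENNReal.le_of_forall_nnreal_lt fun r hr => ?_
    have hr1 : (r : ℝ) < 1 := by exact_mod_cast hr
    apply FormalMultilinearSeries.le_radius_of_summable_norm
    simp only [FormalMultilinearSeries.ofScalars_norm]
    rcases eq_or_lt_of_le r.2 with h0 | h0
    · refine summable_of_ne_finset_zero (s := {0}) fun N hN => ?_
      have h0' : (r : ℝ) = 0 := h0.symm
      rw [h0', zero_pow (by simpa using hN), mul_zero]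
    · have := dd_summable q 0 (-Real.log r) (neg_pos.mpr (Real.log_neg h0 hr1))
      refine this.congr fun N => ?_
      have h0' : 0 < (r : ℝ) := h0
      rw [show -(N : ℝ) * (-Real.log r) = N * Real.log r by ring, Real.exp_nat_mul, Real.exp_log h0']
      simp [abs_of_nonneg (dd_nonneg _ _)]
  have := (FormalMultilinearSeries.hasFPowerSeriesOnBall _ (lt_of_lt_of_le one_pos hr)).mono one_pos hr
  convert this using 1
  ext z
  have := FormalMultilinearSeries.ofScalars_sum_eq (fun N => (dd (q + 2) N : ℂ)) z
  simp only [FF]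
  rw [FormalMultilinearSeries.ofScalarsSum] at this
  simpa using this.symm

lemma FF_coeff (q n : ℕ) : iteratedDeriv n (FF q) 0 = n.factorial * (dd (q + 2) n : ℂ) := by
  have := (FF_ps q).factorial_smul 1 n
  rw [iteratedFDeriv_apply_eq_iteratedDeriv_mul_prod, Finset.prod_const_one, one_smul] at this
  rw [← this]
  rw [FormalMultilinearSeries.ofScalars_apply_eq]
  simp

lemma FF_diff (q : ℕ) : DifferentiableOn ℂ (FF q) (Metric.ball 0 1) := by
  have := (FF_ps q).differentiableOn
  refine this.mono ?_
  intro z hz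
  have hz' : ‖z‖ < 1 := by simpa using hz
  have : ‖z‖ₑ < 1 := by
    rw [← ofReal_norm_eq_enorm, ← ENNReal.ofReal_one]
    exact (ENNReal.ofReal_lt_ofReal_iff one_pos).2 hz'
  simpa using this

lemma FF_an (q : ℕ) : AnalyticAt ℂ (FF q) 0 := (FF_ps q).analyticAt

noncomputable def gg (q : ℕ) (y : ℝ) (z : ℂ) : ℂ := Complex.exp (y * FF q z)

lemma gg_coeff (q : ℕ) (y : ℝ) (hy : 0 ≤ y) (n : ℕ) :
    iteratedDeriv n (gg q y) 0 = n.factorial * (Hpoly (q + 2) n y : ℂ) := by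
  have hF := FF_an q
  have hg : AnalyticAt ℂ (gg q y) 0 := by
    unfold gg; fun_prop
  have hd : deriv (gg q y) =ᶠ[𝓝 0] fun z => (y : ℂ) * (deriv (FF q) * gg q y) z := by
    filter_upwards [hF.eventually_analyticAt] with z hz
    have h1 : HasDerivAt (FF q) (deriv (FF q) z) z := hz.differentiableAt.hasDerivAt
    have := (h1.const_mul (y : ℂ)).cexp
    rw [show gg q y = fun z => Complex.exp (y * FF q z) from rfl, this.deriv]
    simp only [Pi.mul_apply, gg]; ring
  induction n using Nat.strong_induction_on with
  | _ n ih =>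
  rcases n with _ | n
  · have h0 : FF q 0 = 0 := by
      have := FF_coeff q 0
      simpa [dd_zero] using this
    simp [gg, h0, Hpoly_zero]
  · rw [iteratedDeriv_succ', hd.iteratedDeriv_eq n, iteratedDeriv_const_mul_field,
      iteratedDeriv_mul hF.deriv.contDiffAt hg.contDiffAt]
    have hrec := Hrec_real (q + 2) n (by omega) y hy
    have hrec' : ((n : ℂ) + 1) * (Hpoly (q + 2) (n + 1) y : ℂ) =
      y * ∑ i ∈ Finset.range (n + 1), (cc (q + 2) (i + 1) : ℂ) * (Hpoly (q + 2) (n - i) y : ℂ) := by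
      exact_mod_cast hrec
    rw [Nat.factorial_succ]
    push_cast
    rw [show ((n : ℂ) + 1) * n.factorial * (Hpoly (q + 2) (n + 1) y : ℂ) =
      n.factorial * (((n : ℂ) + 1) * (Hpoly (q + 2) (n + 1) y : ℂ)) by ring, hrec', mul_left_comm (n.factorial : ℂ),
      Finset.mul_sum (Finset.range (n + 1)) _ (n.factorial : ℂ)]
    congr 1
    refine Finset.sum_congr rfl fun i hi => ?_
    rw [Finset.mem_range] at hi
    rw [← iteratedDeriv_succ', FF_coeff, ih (n - i) (by omega), dd, Nat.factorial_succ]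
    have h3 : n.choose i * i.factorial * (n - i).factorial = n.factorial :=
      Nat.choose_mul_factorial_mul_factorial (by omega)
    rw [← h3]
    push_cast
    have : (i : ℂ) + 1 ≠ 0 := by exact_mod_cast Nat.succ_ne_zero i
    field_simp

theorem cauchy_H (q n : ℕ) (y t : ℝ) (hy : 0 ≤ y) (ht : 0 < t) :
    2 * (π : ℂ) * ((Hpoly (q + 2) n y * Real.exp (-(n * t)) : ℝ) : ℂ) =
      ∫ θ in (-π)..π, Complex.exp (y * FF q (Complex.exp (-t + θ * Complex.I)) - n * θ * Complex.I) := by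
  have hR : 0 < Real.exp (-t) := Real.exp_pos _
  have hdiff : DiffContOnCl ℂ (gg q y) (Metric.ball 0 (Real.exp (-t))) := by
    apply DifferentiableOn.diffContOnCl
    rw [closure_ball _ hR.ne']
    have : DifferentiableOn ℂ (gg q y) (Metric.ball 0 1) := by
      unfold gg
      exact ((FF_diff q).const_mul _).cexp
    exact this.mono (Metric.closedBall_subset_ball (by rw [Real.exp_lt_one_iff]; linarith))
  have h := hdiff.circleIntegral_one_div_sub_center_pow_smul hR n
  rw [gg_coeff q y hy] at h
  set G : ℝ → ℂ := fun θ => Complex.exp (y * FF q (Complex.exp (-t + θ * Complex.I)) - n * θ * Complex.I) with hG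
  have hper : Function.Periodic G (2 * π) := by
    intro θ
    simp only [hG]
    have e1 : Complex.exp (-t + ((θ + 2 * π : ℝ) : ℂ) * Complex.I) = Complex.exp (-t + θ * Complex.I) := by
      rw [← Complex.exp_periodic (-t + θ * Complex.I)]; congr 1; push_cast; ring
    rw [e1, Complex.exp_eq_exp_iff_exists_int]
    refine ⟨-n, ?_⟩
    push_cast; ring
  have h2 := hper.intervalIntegral_add_eq (-π) 0
  rw [show -π + 2 * π = π by ring, zero_add] at h2
  rw [h2]
  rw [circleIntegral] at h
  have h3 : ∀ θ : ℝ, deriv (circleMap 0 (Real.exp (-t))) θ •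
      ((1 / (circleMap 0 (Real.exp (-t)) θ - 0) ^ (n + 1)) • gg q y (circleMap 0 (Real.exp (-t)) θ)) =
      (Complex.I * Complex.exp (n * t)) * G θ := by
    intro θ
    have e : circleMap 0 (Real.exp (-t)) θ = Complex.exp (-t + θ * Complex.I) := by
      simp [circleMap, Complex.exp_add]
    rw [deriv_circleMap, e, sub_zero, smul_eq_mul, smul_eq_mul, gg, hG]
    dsimp only
    rw [Complex.exp_sub, one_div,
      ← Complex.exp_nat_mul, ← Complex.exp_neg]
    simp only [div_eq_mul_inv, ← Complex.exp_neg]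
    have : Complex.exp (-t + θ * Complex.I) * Complex.exp (-(((n + 1 : ℕ) : ℂ) * (-t + θ * Complex.I))) =
      Complex.exp (n * t) * Complex.exp (-(n * θ * Complex.I)) := by
      rw [← Complex.exp_add, ← Complex.exp_add]; congr 1; push_cast; ring
    linear_combination (Complex.I * Complex.exp (y * FF q (Complex.exp (-t + θ * Complex.I)))) * this
  simp only [h3] at h
  rw [intervalIntegral.integral_const_mul] at h
  have hf : (n.factorial : ℂ) ≠ 0 := by exact_mod_cast n.factorial_ne_zero
  rw [smul_eq_mul] at h
  have h4 : Complex.I * (Complex.exp (n * t) * ∫ θ in (0 : ℝ)..2 * π, G θ) =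
      Complex.I * (2 * π * (Hpoly (q + 2) n y : ℂ)) := by
    rw [← mul_assoc, h]; field_simp
  have h5 := mul_left_cancel₀ Complex.I_ne_zero h4
  push_cast
  rw [← mul_assoc, ← h5, mul_right_comm, ← Complex.exp_add]
  simp

end KP

open Filter Topology Real MeasureTheory Asymptotics
open scoped ENNReal
namespace KP

lemma exp_taylor3 (z : ℝ) : ‖Complex.exp (z * Complex.I) - 1 - z * Complex.I + (z : ℂ) ^ 2 / 2‖ ≤ 4 * |z| ^ 3 := by
  rcases le_total |z| 1 with h | h
  · have hn : ‖(z : ℂ) * Complex.I‖ = |z| := by simp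
    have := Complex.exp_bound (x := z * Complex.I) (by rw [hn]; exact h) (n := 3) (by norm_num)
    rw [hn] at this
    simp only [Finset.sum_range_succ, Finset.range_zero, Finset.sum_empty, Nat.factorial] at this
    norm_num [mul_pow] at this
    have e : Complex.exp (z * Complex.I) - 1 - z * Complex.I + (z : ℂ) ^ 2 / 2 =
      Complex.exp (z * Complex.I) - (1 + z * Complex.I + -(z : ℂ) ^ 2 / 2) := by ring
    rw [e]
    refine this.trans ?_
    have : 0 ≤ |z| ^ 3 := by positivity
    nlinarith
  · have h1 : ‖Complex.exp (z * Complex.I)‖ = 1 := Complex.norm_exp_ofReal_mul_I z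
    have h2 : ‖(z : ℂ) * Complex.I‖ = |z| := by simp
    have h3 : ‖(z : ℂ) ^ 2 / 2‖ = |z| ^ 2 / 2 := by simp
    calc _ ≤ ‖Complex.exp (z * Complex.I)‖ + ‖(1 : ℂ)‖ + ‖(z : ℂ) * Complex.I‖ + ‖(z : ℂ) ^ 2 / 2‖ := by
          refine (norm_add_le _ _).trans (add_le_add_left ((norm_sub_le _ _).trans (add_le_add_left (norm_sub_le _ _) _)) _)
      _ = 1 + 1 + |z| + |z| ^ 2 / 2 := by rw [h1, h2, h3, norm_one]
      _ ≤ 4 * |z| ^ 3 := by nlinarith [mul_nonneg (sub_nonneg.2 h) (sub_nonneg.2 h), mul_nonneg (sub_nonneg.2 h) (sq_nonneg |z|)]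

noncomputable def SS (q : ℕ) (t θ : ℝ) : ℂ :=
  FF q (Complex.exp (-t + θ * Complex.I)) - (MM (dd (q + 2)) 0 t : ℂ)

lemma term_eq (t θ : ℝ) (N : ℕ) : Complex.exp (-t + θ * Complex.I) ^ N =
    (Real.exp (-N * t) : ℂ) * Complex.exp (((N * θ : ℝ) : ℂ) * Complex.I) := by
  rw [← Complex.exp_nat_mul, Complex.ofReal_exp, ← Complex.exp_add]
  congr 1; push_cast; ring

lemma SS_hasSum (q : ℕ) (t θ : ℝ) (ht : 0 < t) :
    HasSum (fun N : ℕ => ((dd (q + 2) N * Real.exp (-N * t) : ℝ) : ℂ) *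
      (Complex.exp (((N * θ : ℝ) : ℂ) * Complex.I) - 1)) (SS q t θ) := by
  have h0 := dd_summable q 0 t ht
  have hM : HasSum (fun N : ℕ => ((dd (q + 2) N * (N : ℝ) ^ 0 * Real.exp (-N * t) : ℝ) : ℂ))
      (MM (dd (q + 2)) 0 t : ℂ) := by
    rw [Complex.hasSum_ofReal]; exact h0.hasSum
  have hF : HasSum (fun N : ℕ => (dd (q + 2) N : ℂ) * Complex.exp (-t + θ * Complex.I) ^ N)
      (FF q (Complex.exp (-t + θ * Complex.I))) := by
    apply Summable.hasSum
    apply Summable.of_norm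
    refine h0.congr fun N => ?_
    rw [norm_mul, term_eq, norm_mul, Complex.norm_exp_ofReal_mul_I, Complex.norm_real, Complex.norm_real,
      Real.norm_of_nonneg (dd_nonneg _ _), Real.norm_of_nonneg (Real.exp_pos _).le]
    simp
  refine (hF.sub hM).congr_fun ?_
  intro N
  rw [term_eq]; push_cast; ring

lemma SS_taylor (q : ℕ) (t θ : ℝ) (ht : 0 < t) :
    ‖SS q t θ - (θ * MM (dd (q + 2)) 1 t : ℝ) * Complex.I + ((θ ^ 2 / 2 * MM (dd (q + 2)) 2 t : ℝ) : ℂ)‖ ≤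
      4 * |θ| ^ 3 * MM (dd (q + 2)) 3 t := by
  have h1 : HasSum (fun N : ℕ => ((θ * (dd (q + 2) N * (N : ℝ) ^ 1 * Real.exp (-N * t)) : ℝ) : ℂ))
      ((θ * MM (dd (q + 2)) 1 t : ℝ) : ℂ) := by
    rw [Complex.hasSum_ofReal]; exact (dd_summable q 1 t ht).hasSum.mul_left _
  have h2 : HasSum (fun N : ℕ => ((θ ^ 2 / 2 * (dd (q + 2) N * (N : ℝ) ^ 2 * Real.exp (-N * t)) : ℝ) : ℂ))
      ((θ ^ 2 / 2 * MM (dd (q + 2)) 2 t : ℝ) : ℂ) := by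
    rw [Complex.hasSum_ofReal]; exact (dd_summable q 2 t ht).hasSum.mul_left _
  have h3 : HasSum (fun N : ℕ => 4 * |θ| ^ 3 * (dd (q + 2) N * (N : ℝ) ^ 3 * Real.exp (-N * t)))
      (4 * |θ| ^ 3 * MM (dd (q + 2)) 3 t) := (dd_summable q 3 t ht).hasSum.mul_left _
  have h := ((SS_hasSum q t θ ht).sub (h1.mul_right Complex.I)).add h2
  rw [← h.tsum_eq]
  refine tsum_of_norm_bounded h3 fun N => ?_
  have e := exp_taylor3 (N * θ)
  have hc : 0 ≤ dd (q + 2) N * Real.exp (-N * t) := mul_nonneg (dd_nonneg _ _) (Real.exp_pos _).le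
  have : (((dd (q + 2) N * Real.exp (-N * t) : ℝ) : ℂ) *
      (Complex.exp (((N * θ : ℝ) : ℂ) * Complex.I) - 1) - ((θ * (dd (q + 2) N * (N : ℝ) ^ 1 * Real.exp (-N * t)) : ℝ) : ℂ) * Complex.I
      + ((θ ^ 2 / 2 * (dd (q + 2) N * (N : ℝ) ^ 2 * Real.exp (-N * t)) : ℝ) : ℂ)) =
      ((dd (q + 2) N * Real.exp (-N * t) : ℝ) : ℂ) * (Complex.exp (((N * θ : ℝ) : ℂ) * Complex.I) - 1
       - ((N * θ : ℝ) : ℂ) * Complex.I + (((N * θ : ℝ) : ℂ)) ^ 2 / 2) := by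
    push_cast; ring
  rw [this, norm_mul, Complex.norm_real, Real.norm_of_nonneg hc]
  refine (mul_le_mul_of_nonneg_left e hc).trans (le_of_eq ?_)
  rw [abs_mul, Nat.abs_cast]; ring

lemma SS_re_hasSum (q : ℕ) (t θ : ℝ) (ht : 0 < t) :
    HasSum (fun N : ℕ => dd (q + 2) N * Real.exp (-N * t) * (1 - Real.cos (N * θ))) (-(SS q t θ).re) := by
  have := (Complex.hasSum_re (SS_hasSum q t θ ht)).neg
  refine this.congr_fun fun N => ?_
  rw [Complex.re_ofReal_mul, Complex.sub_re, Complex.exp_ofReal_mul_I_re, Complex.one_re]; ring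

lemma SS_re_geom (q : ℕ) (t θ : ℝ) (ht : 0 < t) :
    1 / (1 - Real.exp (-t)) - 1 / ‖1 - Complex.exp (-t + θ * Complex.I)‖ ≤ -(SS q t θ).re := by
  have hw : ‖Complex.exp (-t + θ * Complex.I)‖ < 1 := by
    rw [Complex.norm_exp]; simpa using ht
  have h1 := hasSum_geometric_of_norm_lt_one hw
  have h2 := hasSum_geometric_of_lt_one (Real.exp_pos (-t)).le (by rw [Real.exp_lt_one_iff]; linarith)
  have h3 := h2.sub (Complex.hasSum_re h1)
  have h4 : (1 - Real.exp (-t))⁻¹ - ((1 - Complex.exp (-t + θ * Complex.I))⁻¹).re ≤ -(SS q t θ).re := by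
    refine hasSum_le (fun N => ?_) h3 (SS_re_hasSum q t θ ht)
    rw [term_eq, Complex.re_ofReal_mul, Complex.exp_ofReal_mul_I_re, ← Real.exp_nat_mul]
    rw [show (N : ℝ) * -t = -N * t by ring]
    rcases Nat.eq_zero_or_pos N with rfl | hN
    · simp [dd_zero]
    · have := dd_ge (q + 2) N (by omega) hN
      have h5 : 0 ≤ Real.exp (-N * t) * (1 - Real.cos (N * θ)) :=
        mul_nonneg (Real.exp_pos _).le (by have := Real.cos_le_one (N * θ); linarith)
      nlinarith
  have h6 : ((1 - Complex.exp (-t + θ * Complex.I))⁻¹).re ≤ 1 / ‖1 - Complex.exp (-t + θ * Complex.I)‖ := by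
    refine (Complex.re_le_norm _).trans (le_of_eq ?_)
    rw [norm_inv, one_div]
  rw [one_div]
  linarith

lemma SS_far (q : ℕ) (η : ℝ) (hη : 0 < η) : ∃ c > 0, ∀ t θ : ℝ, 0 < t → t ≤ 1 → η * t ≤ |θ| → |θ| ≤ π →
    c / t ≤ -(SS q t θ).re := by
  set κ : ℝ := 4 * Real.exp (-1) * η ^ 2 / π ^ 2 with hκ
  have hκ0 : 0 < κ := by positivity
  have hs : 1 < Real.sqrt (1 + κ) := by
    rw [Real.lt_sqrt (by norm_num)]; linarith
  refine ⟨1 - 1 / Real.sqrt (1 + κ), ?_, fun t θ ht ht1 h1 h2 => ?_⟩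
  · rw [gt_iff_lt, sub_pos, div_lt_one (by linarith)]; exact hs
  refine le_trans ?_ (SS_re_geom q t θ ht)
  set r := Real.exp (-t) with hr
  have hr1 : 0 < 1 - r := by
    have : r < 1 := by rw [hr, Real.exp_lt_one_iff]; linarith
    linarith
  have hrt : 1 - r ≤ t := by
    have := Real.add_one_le_exp (-t); linarith
  have hre : Real.exp (-1) ≤ r := Real.exp_le_exp.2 (by linarith)
  have hcos : 2 / π ^ 2 * θ ^ 2 ≤ 1 - Real.cos θ := by
    have := Real.cos_le_one_sub_mul_cos_sq h2; linarith
  have hn : ‖1 - Complex.exp (-t + θ * Complex.I)‖ ^ 2 = (1 - r) ^ 2 + 2 * r * (1 - Real.cos θ) := by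
    rw [← Complex.normSq_eq_norm_sq, Complex.normSq_apply]
    have e : Complex.exp (-t + θ * Complex.I) = (r : ℂ) * Complex.exp (θ * Complex.I) := by
      rw [Complex.exp_add, hr, Complex.ofReal_exp, Complex.ofReal_neg]
    rw [e, Complex.sub_re, Complex.sub_im, Complex.re_ofReal_mul, Complex.im_ofReal_mul,
      Complex.exp_ofReal_mul_I_re, Complex.exp_ofReal_mul_I_im, Complex.one_re, Complex.one_im]
    nlinarith [Real.sin_sq_add_cos_sq θ]
  have hge : (1 - r) * Real.sqrt (1 + κ) ≤ ‖1 - Complex.exp (-t + θ * Complex.I)‖ := by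
    refine le_of_sq_le_sq ?_ (norm_nonneg _)
    rw [hn, mul_pow, Real.sq_sqrt (by linarith)]
    have hθ : η ^ 2 * (1 - r) ^ 2 ≤ θ ^ 2 := by
      rw [← mul_pow, ← sq_abs θ]
      apply pow_le_pow_left₀ (by positivity)
      exact (mul_le_mul_of_nonneg_left hrt hη.le).trans h1
    have h6 : 2 / π ^ 2 * (η ^ 2 * (1 - r) ^ 2) ≤ 1 - Real.cos θ :=
      (mul_le_mul_of_nonneg_left hθ (by positivity)).trans hcos
    have h7 : Real.exp (-1) * (2 / π ^ 2 * (η ^ 2 * (1 - r) ^ 2)) ≤ r * (1 - Real.cos θ) :=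
      mul_le_mul hre h6 (by positivity) (Real.exp_pos _).le
    have h8 : (1 - r) ^ 2 * κ = 2 * (Real.exp (-1) * (2 / π ^ 2 * (η ^ 2 * (1 - r) ^ 2))) := by
      rw [hκ]; ring
    linarith
  have hpos : 0 < (1 - r) * Real.sqrt (1 + κ) := by positivity
  have h9 : 1 / ‖1 - Complex.exp (-t + θ * Complex.I)‖ ≤ 1 / ((1 - r) * Real.sqrt (1 + κ)) :=
    one_div_le_one_div_of_le hpos hge
  have h10 : 1 / (1 - r) - 1 / ((1 - r) * Real.sqrt (1 + κ)) = (1 - 1 / Real.sqrt (1 + κ)) / (1 - r) := by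
    field_simp
  have h11 : (1 - 1 / Real.sqrt (1 + κ)) / t ≤ (1 - 1 / Real.sqrt (1 + κ)) / (1 - r) := by
    apply div_le_div_of_nonneg_left _ hr1 hrt
    rw [sub_nonneg, div_le_one (by linarith)]; exact hs.le
  linarith

end KP

open Filter Topology Real MeasureTheory Asymptotics
open scoped ENNReal
namespace KP

noncomputable def KK (q k : ℕ) : ℝ := (q + k).factorial * ∏ j ∈ Finset.Icc 2 (q + 2), zetaR (j : ℝ)

lemma zetaR_pos (j : ℕ) (hj : 2 ≤ j) : 0 < zetaR (j : ℝ) := by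
  rw [zetaR_eq]
  exact (zeta_summable j hj).tsum_pos (fun k => by positivity) 1 (by simp)

lemma KK_pos (q k : ℕ) : 0 < KK q k := by
  unfold KK
  refine mul_pos (by positivity) (Finset.prod_pos fun j hj => zetaR_pos j (Finset.mem_Icc.1 hj).1)

lemma MM_lim (q k : ℕ) : Tendsto (fun t => t ^ (q + k + 1) * MM (dd (q + 2)) k t) (𝓝[>] 0) (𝓝 (KK q k)) :=
  (MM_asymp q k).2

lemma SS_near (q : ℕ) : ∃ η > 0, ∃ c > 0, ∃ t₀ > 0, ∀ t θ : ℝ, 0 < t → t ≤ t₀ → |θ| ≤ η * t →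
    c * (θ ^ 2 / t ^ (q + 3)) ≤ -(SS q t θ).re := by
  obtain ⟨C, hC⟩ := (MM_asymp q 3).1
  have hC0 : 0 ≤ C := le_trans (mul_nonneg (by norm_num) (MM_nonneg q 3 1)) (hC 1 one_pos)
  have hK := KK_pos q 2
  have hev : ∀ᶠ t in 𝓝[>] (0 : ℝ), KK q 2 / 2 < t ^ (q + 2 + 1) * MM (dd (q + 2)) 2 t :=
    (MM_lim q 2).eventually_const_lt (by linarith)
  obtain ⟨t₀, ht₀, h⟩ := mem_nhdsGT_iff_exists_Ioc_subset.1 hev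
  refine ⟨KK q 2 / (32 * (C + 1)), by positivity, KK q 2 / 8, by positivity, t₀, ht₀, fun t θ ht htt hθ => ?_⟩
  have h2 : KK q 2 / 2 < t ^ (q + 3) * MM (dd (q + 2)) 2 t := h ⟨ht, htt⟩
  have h3 : t ^ (q + 4) * MM (dd (q + 2)) 3 t ≤ C := hC t ht
  have hT := SS_taylor q t θ ht
  have hre := (Complex.re_le_norm _).trans hT
  rw [Complex.add_re, Complex.sub_re, Complex.re_ofReal_mul, Complex.I_re, mul_zero, sub_zero, Complex.ofReal_re] at hre
  have hp : 0 < t ^ (q + 3) := by positivity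
  have h4 : 4 * |θ| ^ 3 * MM (dd (q + 2)) 3 t ≤ θ ^ 2 / t ^ (q + 3) * (KK q 2 / 8) := by
    have e1 : |θ| ^ 3 = θ ^ 2 * |θ| := by rw [pow_succ, sq_abs]
    have e2 : MM (dd (q + 2)) 3 t ≤ C / t ^ (q + 4) := by rw [le_div_iff₀ (by positivity)]; linarith
    have e3 : |θ| * MM (dd (q + 2)) 3 t ≤ KK q 2 / (32 * (C + 1)) * t * (C / t ^ (q + 4)) :=
      mul_le_mul hθ e2 (MM_nonneg _ _ _) (by positivity)
    have e4 : KK q 2 / (32 * (C + 1)) * t * (C / t ^ (q + 4)) = (1 / t ^ (q + 3)) * (KK q 2 / 32) * (C / (C + 1)) := by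
      rw [pow_succ t (q + 3)]; field_simp
    have e5 : C / (C + 1) ≤ 1 := by rw [div_le_one (by linarith)]; linarith
    have e6 : (1 / t ^ (q + 3)) * (KK q 2 / 32) * (C / (C + 1)) ≤ (1 / t ^ (q + 3)) * (KK q 2 / 32) :=
      mul_le_of_le_one_right (by positivity) e5
    calc 4 * |θ| ^ 3 * MM (dd (q + 2)) 3 t = 4 * θ ^ 2 * (|θ| * MM (dd (q + 2)) 3 t) := by rw [e1]; ring
      _ ≤ 4 * θ ^ 2 * ((1 / t ^ (q + 3)) * (KK q 2 / 32)) := by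
          apply mul_le_mul_of_nonneg_left _ (by positivity); linarith
      _ = _ := by ring
  have h5 : θ ^ 2 / t ^ (q + 3) * (KK q 2 / 4) ≤ θ ^ 2 / 2 * MM (dd (q + 2)) 2 t := by
    have e2 : KK q 2 / 2 / t ^ (q + 3) ≤ MM (dd (q + 2)) 2 t := by rw [div_le_iff₀ hp]; linarith
    calc _ = θ ^ 2 / 2 * (KK q 2 / 2 / t ^ (q + 3)) := by ring
      _ ≤ _ := mul_le_mul_of_nonneg_left e2 (by positivity)
  linarith

lemma SS_dom (q : ℕ) : ∃ c > 0, ∃ t₀ > 0, t₀ ≤ 1 ∧ ∀ t θ : ℝ, 0 < t → t ≤ t₀ → |θ| ≤ π →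
    c * (θ ^ 2 / t ^ (q + 3)) ≤ -(SS q t θ).re ∨ c / t ≤ -(SS q t θ).re := by
  obtain ⟨η, hη, c, hc, t₀, ht₀, h⟩ := SS_near q
  obtain ⟨c', hc', h'⟩ := SS_far q η hη
  refine ⟨min c c', lt_min hc hc', min t₀ 1, lt_min ht₀ one_pos, min_le_right _ _, fun t θ ht htt hθ => ?_⟩
  rcases le_total |θ| (η * t) with hh | hh
  · left
    exact (mul_le_mul_of_nonneg_right (min_le_left _ _) (by positivity)).trans (h t θ ht (htt.trans (min_le_left _ _)) hh)
  · right
    exact (div_le_div_of_nonneg_right (min_le_right _ _) ht.le).trans (h' t θ ht (htt.trans (min_le_right _ _)) hh hθ)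

lemma exp_dom (q : ℕ) (y₀ : ℝ) (hy₀ : 0 < y₀) : ∃ C, ∃ t₀ > 0, ∀ t θ y : ℝ, 0 < t → t ≤ t₀ → |θ| ≤ π → y₀ ≤ y →
    Real.exp (y * (SS q t θ).re) ≤ C / (1 + θ ^ 2 / t ^ (q + 3)) := by
  obtain ⟨c, hc, t₀, ht₀, ht01, h⟩ := SS_dom q
  set a := y₀ * c with ha
  have ha0 : 0 < a := by positivity
  set C1 := 1 + 1 / a
  set C2 := ((q + 3).factorial / a ^ (q + 3)) * (1 + π ^ 2) with hC2
  refine ⟨C1 + C2, t₀, ht₀, fun t θ y ht htt hθ hy => ?_⟩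
  have hp : 0 < t ^ (q + 3) := by positivity
  have hp1 : t ^ (q + 3) ≤ 1 := pow_le_one₀ ht.le (htt.trans ht01)
  set u := θ ^ 2 / t ^ (q + 3) with hu
  have hu0 : 0 ≤ u := by positivity
  have hC10 : 0 < C1 := by positivity
  have hC20 : 0 < C2 := by positivity
  rcases h t θ ht htt hθ with h1 | h1
  · have h2 : y * (SS q t θ).re ≤ -(a * u) := by
      have h3 : y₀ * (c * u) ≤ y * (-(SS q t θ).re) := mul_le_mul hy h1 (by positivity) (hy₀.le.trans hy)
      rw [ha]; linarith
    have h3 : Real.exp (y * (SS q t θ).re) ≤ 1 / (1 + a * u) := by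
      refine (Real.exp_le_exp.2 h2).trans ?_
      rw [Real.exp_neg, ← one_div]
      apply one_div_le_one_div_of_le (by positivity)
      have := Real.add_one_le_exp (a * u); linarith
    refine h3.trans ?_
    rw [div_le_div_iff₀ (by positivity) (by positivity)]
    have : C1 * (1 + a * u) = 1 + 1 / a + a * u + u := by
      simp only [C1]; field_simp; ring
    have : 0 < 1 / a := by positivity
    have : 0 ≤ a * u := by positivity
    nlinarith
  · have h2 : y * (SS q t θ).re ≤ -(a / t) := by
      have h3 : y₀ * (c / t) ≤ y * (-(SS q t θ).re) := mul_le_mul hy h1 (by positivity) (hy₀.le.trans hy)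
      rw [ha, mul_div_assoc]; linarith
    have h3 : Real.exp (y * (SS q t θ).re) ≤ (q + 3).factorial / a ^ (q + 3) * t ^ (q + 3) := by
      refine (Real.exp_le_exp.2 h2).trans ?_
      have h4 := Real.pow_div_factorial_le_exp (a / t) (by positivity) (q + 3)
      rw [Real.exp_neg, inv_le_comm₀ (Real.exp_pos _) (by positivity)]
      refine le_trans (le_of_eq ?_) h4
      rw [div_pow]; field_simp
    have h5 : 1 + u ≤ (1 + π ^ 2) / t ^ (q + 3) := by
      rw [le_div_iff₀ hp, hu, add_mul, div_mul_cancel₀ _ hp.ne', one_mul]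
      have : θ ^ 2 ≤ π ^ 2 := by rw [← sq_abs θ]; exact pow_le_pow_left₀ (abs_nonneg _) hθ _
      linarith
    rw [le_div_iff₀ (by positivity)]
    calc Real.exp (y * (SS q t θ).re) * (1 + u) ≤
        ((q + 3).factorial / a ^ (q + 3) * t ^ (q + 3)) * ((1 + π ^ 2) / t ^ (q + 3)) :=
          mul_le_mul h3 h5 (by positivity) (by positivity)
      _ = C2 := by rw [hC2]; field_simp
      _ ≤ C1 + C2 := by linarith

lemma SS_cont (q : ℕ) (t : ℝ) (ht : 0 < t) : Continuous (SS q t) := by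
  unfold SS
  refine Continuous.sub ?_ continuous_const
  have : ContinuousOn (FF q) (Metric.ball 0 1) := (FF_diff q).continuousOn
  refine this.comp_continuous (by fun_prop) fun θ => ?_
  rw [mem_ball_zero_iff, Complex.norm_exp]; simpa using ht

noncomputable def II (q : ℕ) (t y ν : ℝ) : ℂ :=
  ∫ θ in (-π)..π, Complex.exp (y * SS q t θ - ν * θ * Complex.I)

noncomputable def pp (q : ℕ) (t : ℝ) : ℝ := t * Real.sqrt (t ^ (q + 1))

lemma pp_pos (q : ℕ) (t : ℝ) (ht : 0 < t) : 0 < pp q t := by unfold pp; positivity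
lemma pp_sq (q : ℕ) (t : ℝ) (ht : 0 < t) : pp q t ^ 2 = t ^ (q + 3) := by
  unfold pp; rw [mul_pow, Real.sq_sqrt (by positivity)]; ring

lemma II_scale (q : ℕ) (t y ν : ℝ) (ht : 0 < t) :
    ((pp q t)⁻¹ : ℂ) * II q t y ν = ∫ φ : ℝ, (Set.Ioc (-(π / pp q t)) (π / pp q t)).indicator
      (fun φ : ℝ => Complex.exp (y * SS q t (pp q t * φ) - ν * (pp q t * φ : ℝ) * Complex.I)) φ := by
  have hp := pp_pos q t ht
  rw [integral_indicator measurableSet_Ioc, ← intervalIntegral.integral_of_le (by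
    have : 0 ≤ π / pp q t := by positivity
    linarith)]
  rw [intervalIntegral.integral_comp_mul_left
    (fun θ : ℝ => Complex.exp (y * SS q t θ - ν * (θ : ℝ) * Complex.I)) hp.ne']
  rw [mul_neg, mul_div_cancel₀ _ hp.ne', II]
  rw [Complex.real_smul]; simp

end KP

open Filter Topology Real MeasureTheory Asymptotics
open scoped ENNReal
namespace KP

lemma pp_tendsto (q : ℕ) : Tendsto (fun t => pp q t / t) (𝓝[>] 0) (𝓝 0) := by
  have h : Tendsto (fun t : ℝ => Real.sqrt (t ^ (q + 1))) (𝓝[>] 0) (𝓝 0) := by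
    have : Continuous (fun t : ℝ => Real.sqrt (t ^ (q + 1))) := by fun_prop
    have h2 := this.tendsto 0
    simp at h2
    exact h2.mono_left nhdsWithin_le_nhds
  refine h.congr' ?_
  filter_upwards [self_mem_nhdsWithin] with t ht
  have : t ≠ 0 := ne_of_gt ht
  unfold pp; field_simp

lemma pp_tendsto0 (q : ℕ) : Tendsto (pp q) (𝓝[>] 0) (𝓝[>] 0) := by
  refine tendsto_nhdsWithin_iff.2 ⟨?_, ?_⟩
  · have h := (pp_tendsto q).mul (tendsto_id.mono_left nhdsWithin_le_nhds : Tendsto (fun t : ℝ => t) (𝓝[>] 0) (𝓝 0))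
    rw [zero_mul] at h
    refine h.congr' ?_
    filter_upwards [self_mem_nhdsWithin] with t ht
    have : t ≠ 0 := ne_of_gt ht
    simp only [id]
    field_simp
  · filter_upwards [self_mem_nhdsWithin] with t ht using pp_pos q t ht

theorem II_limit (q : ℕ) (x μ : ℝ) (hx : 0 < x) (t y ν : ℕ → ℝ)
    (ht : Tendsto t atTop (𝓝[>] 0)) (hy : Tendsto y atTop (𝓝 x))
    (hν : ∀ᶠ n in atTop, ν n = x * MM (dd (q + 2)) 1 (t n))
    (hμ : Tendsto (fun n => (y n - x) * MM (dd (q + 2)) 1 (t n) * pp q (t n)) atTop (𝓝 μ)) :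
    Tendsto (fun n => ((pp q (t n))⁻¹ : ℂ) * II q (t n) (y n) (ν n)) atTop
      (𝓝 (∫ φ : ℝ, Complex.exp (-(x * KK q 2 / 2 : ℝ) * φ ^ 2 + (μ * Complex.I) * φ))) := by
  have htpos : ∀ᶠ n in atTop, 0 < t n := (tendsto_nhdsWithin_iff.1 ht).2
  obtain ⟨C, t₀, ht₀, hdom⟩ := exp_dom q (x / 2) (by linarith)
  have htle : ∀ᶠ n in atTop, t n ≤ t₀ := by
    have := (tendsto_nhdsWithin_iff.1 ht).1
    filter_upwards [this.eventually_lt_const ht₀] with n hn using hn.le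
  have hyge : ∀ᶠ n in atTop, x / 2 ≤ y n := by
    filter_upwards [hy.eventually_const_lt (show x / 2 < x by linarith)] with n hn using hn.le
  have hC : 0 ≤ C := by
    have := hdom t₀ 0 (x / 2) ht₀ le_rfl (by simp [Real.pi_pos.le]) le_rfl
    simp at this
    exact (Real.exp_pos _).le.trans this
  have key : Tendsto (fun n => ∫ φ : ℝ, (Set.Ioc (-(π / pp q (t n))) (π / pp q (t n))).indicator
      (fun φ : ℝ => Complex.exp (y n * SS q (t n) (pp q (t n) * φ) - ν n * (pp q (t n) * φ : ℝ) * Complex.I)) φ)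
      atTop (𝓝 (∫ φ : ℝ, Complex.exp (-(x * KK q 2 / 2 : ℝ) * φ ^ 2 + (μ * Complex.I) * φ))) := by
    refine tendsto_integral_filter_of_dominated_convergence (fun φ => C * (1 + φ ^ 2)⁻¹) ?_ ?_ ?_ ?_
    · filter_upwards [htpos] with n hn
      have hc : Continuous (fun φ : ℝ => Complex.exp (y n * SS q (t n) (pp q (t n) * φ) - ν n * (pp q (t n) * φ : ℝ) * Complex.I)) := by
        have := SS_cont q (t n) hn
        fun_prop
      exact hc.aestronglyMeasurable.indicator measurableSet_Ioc
    · filter_upwards [htpos, htle, hyge] with n hn h1 h2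
      refine Eventually.of_forall fun φ => ?_
      have hp := pp_pos q _ hn
      by_cases hφ : φ ∈ Set.Ioc (-(π / pp q (t n))) (π / pp q (t n))
      · rw [Set.indicator_of_mem hφ, Complex.norm_exp]
        have habs : |pp q (t n) * φ| ≤ π := by
          rw [abs_mul, abs_of_pos hp, mul_comm, ← le_div_iff₀ hp, abs_le]
          exact ⟨hφ.1.le, hφ.2⟩
        have := hdom (t n) (pp q (t n) * φ) (y n) hn h1 habs h2
        rw [mul_pow, pp_sq q _ hn, mul_div_cancel_left₀ _ (by positivity)] at this
        rw [← div_eq_mul_inv]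
        convert this using 2
        rw [Complex.sub_re, Complex.re_ofReal_mul, ← Complex.ofReal_mul, Complex.re_ofReal_mul, Complex.I_re]
        ring
      · rw [Set.indicator_of_notMem hφ, norm_zero]; positivity
    · exact integrable_inv_one_add_sq.const_mul C
    · refine Eventually.of_forall fun φ => ?_
      have hpinf : Tendsto (fun n => π / pp q (t n)) atTop atTop := by
        have := (tendsto_inv_nhdsGT_zero.comp ((pp_tendsto0 q).comp ht)).const_mul_atTop Real.pi_pos
        simpa [div_eq_mul_inv] using this
      have hin : ∀ᶠ n in atTop, φ ∈ Set.Ioc (-(π / pp q (t n))) (π / pp q (t n)) := by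
        filter_upwards [hpinf.eventually_gt_atTop |φ|] with n hn
        have := abs_lt.1 hn
        exact ⟨this.1, this.2.le⟩
      -- error term
      set E : ℕ → ℂ := fun n => SS q (t n) (pp q (t n) * φ) - ((pp q (t n) * φ) * MM (dd (q + 2)) 1 (t n) : ℝ) * Complex.I
        + (((pp q (t n) * φ) ^ 2 / 2 * MM (dd (q + 2)) 2 (t n) : ℝ) : ℂ) with hE
      have hE0 : Tendsto E atTop (𝓝 0) := by
        rw [tendsto_zero_iff_norm_tendsto_zero]
        have hb : Tendsto (fun n => 4 * |φ| ^ 3 * (pp q (t n) / t n * ((t n) ^ (q + 3 + 1) * MM (dd (q + 2)) 3 (t n)))) atTop (𝓝 0) := by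
          have := (((pp_tendsto q).mul (MM_lim q 3)).comp ht).const_mul (4 * |φ| ^ 3)
          simpa using this
        refine squeeze_zero' (Eventually.of_forall fun n => norm_nonneg _) ?_ hb
        filter_upwards [htpos] with n hn
        refine (SS_taylor q (t n) _ hn).trans (le_of_eq ?_)
        rw [abs_mul, abs_of_pos (pp_pos q _ hn), mul_pow, pow_succ (pp q (t n)) 2, pp_sq q _ hn]
        have : t n ≠ 0 := hn.ne'
        rw [pow_succ (t n) (q + 3)]
        field_simp
      have h2 : Tendsto (fun n => y n * (φ ^ 2 / 2 * ((t n) ^ (q + 2 + 1) * MM (dd (q + 2)) 2 (t n)))) atTop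
          (𝓝 (x * (φ ^ 2 / 2 * KK q 2))) := hy.mul (((MM_lim q 2).comp ht).const_mul _)
      have h1 : Tendsto (fun n => φ * ((y n - x) * MM (dd (q + 2)) 1 (t n) * pp q (t n))) atTop (𝓝 (φ * μ)) :=
        hμ.const_mul _
      have hyc : Tendsto (fun n => (y n : ℂ)) atTop (𝓝 (x : ℂ)) := (Complex.continuous_ofReal.tendsto x).comp hy
      have h1c := ((Complex.continuous_ofReal.tendsto _).comp h1).mul_const Complex.I
      have h2c := (Complex.continuous_ofReal.tendsto _).comp h2
      have h3 := (h1c.sub h2c).add (hyc.mul hE0)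
      have h4 := (Complex.continuous_exp.tendsto _).comp h3
      have hlim : Complex.exp (((φ * μ : ℝ) : ℂ) * Complex.I - ((x * (φ ^ 2 / 2 * KK q 2) : ℝ) : ℂ) + x * 0) =
        Complex.exp (-(x * KK q 2 / 2 : ℝ) * φ ^ 2 + (μ * Complex.I) * φ) := by
        congr 1; push_cast; ring
      rw [hlim] at h4
      refine h4.congr' ?_
      filter_upwards [hin, htpos, hν] with n hn hn0 hνn
      rw [Set.indicator_of_mem hn]
      simp only [Function.comp]
      congr 1
      rw [hE, hνn]
      have hpp : ((pp q (t n) : ℝ) : ℂ) ^ 2 = ((t n : ℝ) : ℂ) ^ (q + 3) := by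
        exact_mod_cast congrArg (fun r : ℝ => (r : ℂ)) (pp_sq q _ hn0)
      push_cast
      linear_combination (-(y n : ℂ) * φ ^ 2 / 2 * (MM (dd (q + 2)) 2 (t n) : ℂ)) * (- hpp)
  refine key.congr' ?_
  filter_upwards [htpos] with n hn
  rw [II_scale q _ _ _ hn]

lemma gauss_val (c μ : ℝ) (hc : 0 < c) :
    ∫ φ : ℝ, Complex.exp (-(c : ℝ) * (φ : ℂ) ^ 2 + (μ * Complex.I) * φ) =
      ((Real.sqrt (π / c) * Real.exp (-(μ ^ 2 / (4 * c))) : ℝ) : ℂ) := by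
  have := integral_cexp_quadratic (b := -(c : ℂ)) (by simpa using hc) (μ * Complex.I) 0
  simp only [add_zero] at this
  rw [this]
  rw [Complex.ofReal_mul, Complex.ofReal_exp, neg_neg, ← Complex.ofReal_div,
    Real.sqrt_eq_rpow, Complex.ofReal_cpow (by positivity)]
  congr 2
  · norm_num
  · push_cast
    rw [mul_pow, Complex.I_sq, zero_sub]
    have : (c : ℂ) ≠ 0 := by exact_mod_cast hc.ne'
    field_simp

theorem H_II (q n : ℕ) (y t : ℝ) (hy : 0 ≤ y) (ht : 0 < t) :
    II q t y n = ((2 * π * (Hpoly (q + 2) n y * Real.exp (-(n * t))) * Real.exp (-(y * MM (dd (q + 2)) 0 t)) : ℝ) : ℂ) := by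
  have h := cauchy_H q n y t hy ht
  rw [Complex.ofReal_mul, Complex.ofReal_mul, Complex.ofReal_mul, Complex.ofReal_ofNat, h, mul_comm,
    ← intervalIntegral.integral_const_mul, II]
  congr 1
  ext θ
  rw [Complex.ofReal_exp, ← Complex.exp_add]
  congr 1
  rw [SS]; push_cast; ring

end KP

open Filter Topology Real MeasureTheory Asymptotics
open scoped ENNReal
namespace KP

lemma MM1_cont (q : ℕ) : ContinuousOn (MM (dd (q + 2)) 1) (Set.Ioi 0) := by
  intro t ht
  have ht' : (0 : ℝ) < t := ht
  have h : ContinuousOn (MM (dd (q + 2)) 1) (Set.Ioi (t / 2)) := by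
    unfold MM
    refine continuousOn_tsum (fun N => by fun_prop) (dd_summable q 1 (t / 2) (by linarith)) ?_
    intro N u hu
    rw [Real.norm_of_nonneg (dd_term_nonneg _ _ _ _)]
    apply mul_le_mul_of_nonneg_left _ (mul_nonneg (dd_nonneg _ _) (by positivity))
    apply Real.exp_le_exp.2
    have hu' : t / 2 < u := hu
    have : (N : ℝ) * (t / 2) ≤ N * u := mul_le_mul_of_nonneg_left hu'.le (by positivity)
    linarith
  exact (h.continuousAt (Ioi_mem_nhds (by linarith))).continuousWithinAt

lemma MM1_surj (q : ℕ) (u : ℝ) (hu : 0 < u) : ∃ t ∈ Set.Ioi (0 : ℝ), MM (dd (q + 2)) 1 t = u := by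
  obtain ⟨C, hC⟩ := (MM_asymp q 1).1
  have hC0 : 0 ≤ C := le_trans (mul_nonneg (by norm_num) (MM_nonneg q 1 1)) (hC 1 one_pos)
  have hK := KK_pos q 1
  -- small t
  obtain ⟨t1, ht1, h1⟩ : ∃ t1 : ℝ, 0 < t1 ∧ u ≤ MM (dd (q + 2)) 1 t1 := by
    have e1 := (MM_lim q 1).eventually_const_lt (show KK q 1 / 2 < KK q 1 by linarith)
    have e2 : ∀ᶠ t : ℝ in 𝓝[>] 0, u * t ^ (q + 1 + 1) < KK q 1 / 2 := by
      have : Continuous (fun t : ℝ => u * t ^ (q + 1 + 1)) := by fun_prop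
      have h2 := this.tendsto 0
      simp at h2
      exact (h2.mono_left nhdsWithin_le_nhds).eventually_lt_const (by linarith)
    obtain ⟨t, h1, h2, h3⟩ := (e1.and (e2.and self_mem_nhdsWithin)).exists
    have h3' : (0 : ℝ) < t := h3
    refine ⟨t, h3, ?_⟩
    have hp : 0 < t ^ (q + 1 + 1) := by positivity
    have : t ^ (q + 1 + 1) * u ≤ t ^ (q + 1 + 1) * MM (dd (q + 2)) 1 t := by linarith
    exact le_of_mul_le_mul_left this hp
  obtain ⟨t2, ht2, h2⟩ : ∃ t2 : ℝ, 0 < t2 ∧ MM (dd (q + 2)) 1 t2 ≤ u := by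
    refine ⟨C / u + 1, by positivity, ?_⟩
    have h3 := hC (C / u + 1) (by positivity)
    have h4 : C / u + 1 ≤ (C / u + 1) ^ (q + 1 + 1) := le_self_pow₀ (by
      have : 0 ≤ C / u := by positivity
      linarith) (by omega)
    have h5 : (C / u + 1) * MM (dd (q + 2)) 1 (C / u + 1) ≤ C :=
      (mul_le_mul_of_nonneg_right h4 (MM_nonneg _ _ _)).trans h3
    have h6 : C ≤ (C / u + 1) * u := by rw [add_mul, div_mul_cancel₀ _ hu.ne']; linarith
    exact le_of_mul_le_mul_left (h5.trans h6) (by positivity)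
  have := isPreconnected_Ioi.intermediate_value (s := Set.Ioi (0 : ℝ)) ht2 ht1 (MM1_cont q)
  obtain ⟨t, h3, h4⟩ := this ⟨h2, h1⟩
  exact ⟨t, h3, h4⟩

lemma inv_spec (q : ℕ) (u : ℝ) (hu : 0 < u) :
    0 < ZstairInv (q + 2) u ∧ MM (dd (q + 2)) 1 (ZstairInv (q + 2) u) = u := by
  obtain ⟨t, ht, h⟩ := MM1_surj q u hu
  have hex : ∃ a ∈ Set.Ioi (0 : ℝ), Zstair (q + 2) ((q + 2 : ℕ) : ℤ) a = u :=
    ⟨t, ht, by rw [← h, ← Zstair_MM q 1 t ht]⟩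
  have h1 := Function.invFunOn_mem hex
  have h2 := Function.invFunOn_eq hex
  refine ⟨h1, ?_⟩
  have := Zstair_MM q 1 _ h1
  unfold ZstairInv
  rw [← this]; exact h2

lemma t_tendsto (q : ℕ) (x : ℝ) (hx : 0 < x) :
    Tendsto (fun n : ℕ => ZstairInv (q + 2) ((n : ℝ) / x)) atTop (𝓝[>] 0) := by
  obtain ⟨C, hC⟩ := (MM_asymp q 1).1
  have hsp : ∀ n : ℕ, 1 ≤ n → 0 < ZstairInv (q + 2) ((n : ℝ) / x) ∧
      MM (dd (q + 2)) 1 (ZstairInv (q + 2) ((n : ℝ) / x)) = (n : ℝ) / x := fun n hn =>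
    inv_spec q _ (by have : (0 : ℝ) < n := by exact_mod_cast hn
                     positivity)
  refine tendsto_nhdsWithin_iff.2 ⟨?_, ?_⟩
  · rw [tendsto_order]
    refine ⟨fun a ha => ?_, fun a ha => ?_⟩
    · filter_upwards [eventually_ge_atTop 1] with n hn using ha.trans (hsp n hn).1
    · have hlim : Tendsto (fun n : ℕ => C * x / n) atTop (𝓝 0) := tendsto_const_div_atTop_nhds_zero_nat _
      filter_upwards [eventually_ge_atTop 1, hlim.eventually_lt_const (show 0 < a ^ (q + 1 + 1) by positivity)] with n hn h1
      obtain ⟨h2, h3⟩ := hsp n hn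
      have h4 := hC _ h2
      rw [h3] at h4
      have hn0 : (0 : ℝ) < n := by exact_mod_cast hn
      refine lt_of_pow_lt_pow_left₀ (q + 1 + 1) ha.le (lt_of_le_of_lt ?_ h1)
      rw [le_div_iff₀ hn0]
      rw [mul_div_assoc', div_le_iff₀ hx] at h4
      exact h4
  · filter_upwards [eventually_ge_atTop 1] with n hn using (hsp n hn).1

lemma Kconst_eq (q : ℕ) : Kconst (q + 2) = KK q 1 := rfl

lemma KK0 (q : ℕ) : KK q 0 = KK q 1 / (q + 1) := by
  unfold KK
  have : ((q : ℝ) + 1) ≠ 0 := by positivity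
  rw [Nat.factorial_succ q]; push_cast; field_simp; simp [mul_comm]

lemma KK2 (q : ℕ) : KK q 2 = (q + 2) * KK q 1 := by
  unfold KK
  rw [show q + 2 = (q + 1) + 1 by ring, Nat.factorial_succ (q + 1)]; push_cast; ring

lemma expectK_eq (ℓ n : ℕ) (x s a b : ℝ) (hx : 0 < x) :
    expectK ℓ n x (fun k => Real.exp (s * (((k : ℝ) - a) / b))) =
      Real.exp (-(s * a / b)) * (Hpoly ℓ n (x * Real.exp (s / b)) / Hpoly ℓ n x) := by
  unfold expectK Hpoly
  have hf : (n.factorial : ℝ) ≠ 0 := by positivity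
  rw [mul_div_mul_left _ _ (by positivity), ← mul_div_assoc, Finset.mul_sum]
  congr 1
  refine Finset.sum_congr rfl fun k _ => ?_
  rw [mul_pow, ← Real.exp_nat_mul]
  have : Real.exp (s * (((k : ℝ) - a) / b)) = Real.exp (-(s * a / b)) * Real.exp (k * (s / b)) := by
    rw [← Real.exp_add]; congr 1; ring
  dsimp only
  rw [this]; ring

noncomputable def JJ (q n : ℕ) (t y : ℝ) : ℝ :=
  2 * π * (Hpoly (q + 2) n y * Real.exp (-(n * t))) * Real.exp (-(y * MM (dd (q + 2)) 0 t)) / pp q t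

theorem JJ_limit (q : ℕ) (x μ : ℝ) (hx : 0 < x) (t y : ℕ → ℝ)
    (ht : Tendsto t atTop (𝓝[>] 0)) (hy : Tendsto y atTop (𝓝 x))
    (hν : ∀ᶠ n : ℕ in atTop, (n : ℝ) = x * MM (dd (q + 2)) 1 (t n))
    (hμ : Tendsto (fun n => (y n - x) * MM (dd (q + 2)) 1 (t n) * pp q (t n)) atTop (𝓝 μ)) :
    Tendsto (fun n => JJ q n (t n) (y n)) atTop
      (𝓝 (Real.sqrt (π / (x * KK q 2 / 2)) * Real.exp (-(μ ^ 2 / (4 * (x * KK q 2 / 2)))))) := by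
  have h := II_limit q x μ hx t y (fun n => (n : ℝ)) ht hy hν hμ
  have hK := KK_pos q 2
  rw [gauss_val _ _ (by positivity)] at h
  have h2 := (Complex.continuous_re.tendsto _).comp h
  rw [Complex.ofReal_re] at h2
  refine h2.congr' ?_
  filter_upwards [(tendsto_nhdsWithin_iff.1 ht).2, hy.eventually_const_lt hx] with n hn hyn
  simp only [Function.comp]
  have := H_II q n (y n) (t n) hyn.le hn
  rw [show ((n : ℝ)) = ((n : ℕ) : ℝ) from rfl, this, ← Complex.ofReal_inv, ← Complex.ofReal_mul, Complex.ofReal_re, JJ]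
  ring

lemma bseq_lim (q : ℕ) (x : ℝ) (hx : 0 < x) (t : ℕ → ℝ) (htpos : ∀ᶠ n in atTop, 0 < t n)
    (h : Tendsto (fun n : ℕ => (n : ℝ) * (t n) ^ (q + 2)) atTop (𝓝 (x * KK q 1))) :
    Tendsto (fun n : ℕ => bseq (q + 2) x n * Real.sqrt ((t n) ^ (q + 1))) atTop
      (𝓝 (Real.sqrt (x * KK q 1 / ((q + 2) * (q + 1))))) := by
  have hK := KK_pos q 1
  have hxK : 0 < x * KK q 1 := by positivity
  have h1 := (h.rpow_const (p := ((q : ℝ) + 1) / (2 * (q + 2))) (Or.inl hxK.ne')).const_mul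
    ((x * KK q 1) ^ ((1 : ℝ) / (2 * ((q : ℝ) + 2))) / Real.sqrt (((q : ℝ) + 2) * (q + 1)))
  have e : (x * KK q 1) ^ ((1 : ℝ) / (2 * ((q : ℝ) + 2))) / Real.sqrt (((q : ℝ) + 2) * (q + 1)) *
      (x * KK q 1) ^ (((q : ℝ) + 1) / (2 * (q + 2))) = Real.sqrt (x * KK q 1 / ((q + 2) * (q + 1))) := by
    rw [div_mul_eq_mul_div, ← Real.rpow_add hxK, Real.sqrt_div hxK.le]
    congr 1
    rw [Real.sqrt_eq_rpow]
    congr 1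
    field_simp; ring
  rw [e] at h1
  refine h1.congr' ?_
  filter_upwards [htpos] with n hn
  have e2 : Real.sqrt ((t n) ^ (q + 1)) = ((t n) ^ (q + 2)) ^ (((q : ℝ) + 1) / (2 * (q + 2))) := by
    rw [Real.sqrt_eq_rpow, ← Real.rpow_natCast, ← Real.rpow_natCast, ← Real.rpow_mul hn.le, ← Real.rpow_mul hn.le]
    congr 1; push_cast; field_simp
  rw [Real.mul_rpow (x := (n : ℝ)) (y := t n ^ (q + 2)) (by positivity) (by positivity), ← e2, bseq, Kconst_eq]
  have e3 : (((q + 2 : ℕ) : ℝ) - 1) = q + 1 := by push_cast; ring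
  rw [e3]; push_cast; ring

lemma exp2_lim (w r : ℕ → ℝ) (c : ℝ) (hr : ∀ᶠ n in atTop, 0 < r n) (hr0 : Tendsto r atTop (𝓝 0))
    (h : Tendsto (fun n => w n / r n) atTop (𝓝 c)) :
    Tendsto w atTop (𝓝 0) ∧ Tendsto (fun n => (Real.exp (w n) - 1) / r n) atTop (𝓝 c) ∧
    Tendsto (fun n => (Real.exp (w n) - 1 - w n) / r n ^ 2) atTop (𝓝 (c ^ 2 / 2)) := by
  have hw : Tendsto w atTop (𝓝 0) := by
    have := h.mul hr0
    rw [mul_zero] at this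
    refine this.congr' ?_
    filter_upwards [hr] with n hn
    field_simp
  have hw1 : ∀ᶠ n in atTop, |w n| ≤ 1 := by
    have := hw.abs
    rw [abs_zero] at this
    filter_upwards [this.eventually_lt_const one_pos] with n hn using hn.le
  have h3 : Tendsto (fun n => (Real.exp (w n) - 1 - w n) / r n ^ 2) atTop (𝓝 (c ^ 2 / 2)) := by
    have hd : Tendsto (fun n => (Real.exp (w n) - 1 - w n) / r n ^ 2 - (w n / r n) ^ 2 / 2) atTop (𝓝 0) := by
      have hb : Tendsto (fun n => |w n| * (w n / r n) ^ 2) atTop (𝓝 0) := by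
        have := hw.abs.mul (h.pow 2)
        simpa using this
      refine squeeze_zero_norm' ?_ hb
      filter_upwards [hr, hw1] with n hn h1
      have := Real.exp_bound h1 (n := 3) (by norm_num)
      simp only [Finset.sum_range_succ, Finset.range_zero, Finset.sum_empty, Nat.factorial] at this
      norm_num at this
      have e : (Real.exp (w n) - 1 - w n) / r n ^ 2 - (w n / r n) ^ 2 / 2 =
        (Real.exp (w n) - (1 + w n + w n ^ 2 / 2)) / r n ^ 2 := by field_simp; ring
      rw [e, Real.norm_eq_abs, abs_div, abs_of_pos (show 0 < r n ^ 2 by positivity), div_pow, mul_div_assoc']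
      apply div_le_div_of_nonneg_right _ (by positivity)
      refine this.trans ?_
      rw [← sq_abs (w n)]
      have : 0 ≤ |w n| ^ 3 := by positivity
      nlinarith
    have := hd.add ((h.pow 2).div_const 2)
    rw [zero_add] at this
    refine this.congr fun n => ?_
    ring
  refine ⟨hw, ?_, h3⟩
  have := (h3.mul hr0).add h
  rw [mul_zero, zero_add] at this
  refine this.congr' ?_
  filter_upwards [hr] with n hn
  field_simp; ring

theorem main (q : ℕ) (x : ℝ) (hx : 0 < x)
    (a b : ℕ → ℝ) (hbpos : ∀ n, 0 < b n)
    (ha : (fun n : ℕ => a n - x * Zstair (q + 2) ((q + 1 : ℕ) : ℤ) (ZstairInv (q + 2) ((n : ℝ) / x)))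
      =o[atTop] fun n : ℕ => bseq (q + 2) x n)
    (hb : Tendsto (fun n : ℕ => b n / bseq (q + 2) x n) atTop (nhds 1)) (s : ℝ) :
      Tendsto (fun n : ℕ =>
          Real.log (expectK (q + 2) n x (fun k => Real.exp (s * (((k : ℝ) - a n) / b n)))))
        atTop (nhds (s ^ 2 / 2)) := by
  set t : ℕ → ℝ := fun n => ZstairInv (q + 2) ((n : ℝ) / x) with htdef
  have ht : Tendsto t atTop (𝓝[>] 0) := t_tendsto q x hx
  have htpos : ∀ᶠ n in atTop, 0 < t n := (tendsto_nhdsWithin_iff.1 ht).2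
  have hν : ∀ᶠ n : ℕ in atTop, (n : ℝ) = x * MM (dd (q + 2)) 1 (t n) := by
    filter_upwards [eventually_ge_atTop 1] with n hn
    have hn0 : (0 : ℝ) < n := by exact_mod_cast hn
    rw [htdef, (inv_spec q _ (by positivity)).2]; field_simp
  have hK := KK_pos q 1
  have hnt : Tendsto (fun n : ℕ => (n : ℝ) * (t n) ^ (q + 2)) atTop (𝓝 (x * KK q 1)) := by
    refine (((MM_lim q 1).comp ht).const_mul x).congr' ?_
    filter_upwards [hν] with n hn
    rw [hn]; simp only [Function.comp]; ring
  have hB := bseq_lim q x hx t htpos hnt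
  set L := Real.sqrt (x * KK q 1 / ((q + 2) * (q + 1))) with hL
  have hL0 : 0 < L := by rw [hL]; positivity
  have hL2 : L ^ 2 = x * KK q 1 / ((q + 2) * (q + 1)) := Real.sq_sqrt (by positivity)
  set r : ℕ → ℝ := fun n => Real.sqrt ((t n) ^ (q + 1)) with hrdef
  have hrpos : ∀ᶠ n in atTop, 0 < r n := by
    filter_upwards [htpos] with n hn
    simp only [hrdef]; positivity
  have hr2 : ∀ᶠ n in atTop, r n ^ 2 = t n ^ (q + 1) := by
    filter_upwards [htpos] with n hn using Real.sq_sqrt (by positivity)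
  have hr0 : Tendsto r atTop (𝓝 0) := by
    have : Continuous (fun t : ℝ => Real.sqrt (t ^ (q + 1))) := by fun_prop
    have h2 := this.tendsto 0
    simp at h2
    exact h2.comp (tendsto_nhdsWithin_iff.1 ht).1
  have hBpos : ∀ᶠ n in atTop, 0 < bseq (q + 2) x n := by
    filter_upwards [hB.eventually_const_lt hL0, hrpos] with n h1 h2
    exact pos_of_mul_pos_left h1 h2.le
  have hbr : Tendsto (fun n => b n * r n) atTop (𝓝 L) := by
    have := hb.mul hB
    rw [one_mul] at this
    refine this.congr' ?_
    filter_upwards [hBpos] with n hn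
    simp only [hrdef]; field_simp
  set w : ℕ → ℝ := fun n => s / b n with hwdef
  have hwr : Tendsto (fun n => w n / r n) atTop (𝓝 (s / L)) := by
    have := (tendsto_const_nhds (x := s)).div hbr hL0.ne'
    refine this.congr fun n => ?_
    simp only [hwdef, Pi.div_apply]; rw [div_div]
  obtain ⟨hw0, hw1, hw2⟩ := exp2_lim w r (s / L) hrpos hr0 hwr
  set y : ℕ → ℝ := fun n => x * Real.exp (w n) with hydef
  have hy : Tendsto y atTop (𝓝 x) := by
    have := ((Real.continuous_exp.tendsto 0).comp hw0).const_mul x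
    simpa using this
  have hμ : Tendsto (fun n => (y n - x) * MM (dd (q + 2)) 1 (t n) * pp q (t n)) atTop (𝓝 (x * (s / L) * KK q 1)) := by
    refine ((hw1.const_mul x).mul ((MM_lim q 1).comp ht)).congr' ?_
    filter_upwards [hrpos, hr2, htpos] with n h1 h2 h3
    simp only [Function.comp, hydef]
    have hp : pp q (t n) = t n * r n := rfl
    have e : t n ^ (q + 1 + 1) = r n ^ 2 * t n := by rw [h2, pow_succ]
    rw [hp, e]; field_simp
  have hμ0 : Tendsto (fun n => ((fun _ : ℕ => x) n - x) * MM (dd (q + 2)) 1 (t n) * pp q (t n)) atTop (𝓝 0) := by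
    simp
  have hJ := JJ_limit q x _ hx t y ht hy hν hμ
  have hJ0 := JJ_limit q x 0 hx t (fun _ => x) ht tendsto_const_nhds hν hμ0
  have hK2 := KK_pos q 2
  set A := Real.sqrt (π / (x * KK q 2 / 2)) with hA
  have hA0 : 0 < A := by rw [hA]; have := Real.pi_pos; positivity
  simp only [ne_eq, OfNat.ofNat_ne_zero, not_false_eq_true, zero_pow, zero_div, neg_zero, Real.exp_zero, mul_one] at hJ0
  have hratio : Tendsto (fun n => Real.log (JJ q n (t n) (y n) / JJ q n (t n) x)) atTop
      (𝓝 (-((q + 1) * s ^ 2 / 2))) := by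
    have h1 := hJ.div hJ0 hA0.ne'
    rw [mul_div_cancel_left₀ _ hA0.ne'] at h1
    have h2 := (Real.continuousAt_log (Real.exp_pos _).ne').tendsto.comp h1
    rw [Real.log_exp] at h2
    suffices e : -((x * (s / L) * KK q 1) ^ 2 / (4 * (x * KK q 2 / 2))) = -((q + 1) * s ^ 2 / 2) by
      rw [e] at h2
      exact h2
    rw [KK2]
    have : (x * (s / L) * KK q 1) ^ 2 = x ^ 2 * s ^ 2 * KK q 1 ^ 2 / L ^ 2 := by field_simp
    rw [this, hL2]
    field_simp
    ring
  have hfirst : Tendsto (fun n => x * MM (dd (q + 2)) 0 (t n) * (Real.exp (w n) - 1 - w n)) atTop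
      (𝓝 ((q + 2) * s ^ 2 / 2)) := by
    have h1 := (((MM_lim q 0).comp ht).const_mul x).mul hw2
    have e : x * KK q 0 * ((s / L) ^ 2 / 2) = (q + 2) * s ^ 2 / 2 := by
      rw [div_pow, hL2, KK0]; field_simp
    rw [e] at h1
    refine h1.congr' ?_
    filter_upwards [hrpos, hr2] with n h1 h2
    simp only [Function.comp, add_zero]
    rw [← h2]; field_simp
  have hsecond : Tendsto (fun n => s * ((x * MM (dd (q + 2)) 0 (t n) - a n) / b n)) atTop (𝓝 0) := by
    have h1 := ha.tendsto_div_nhds_zero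
    have h2 := (h1.div hb one_ne_zero).const_mul (-s)
    rw [zero_div, mul_zero] at h2
    refine h2.congr' ?_
    filter_upwards [hBpos, htpos] with n h3 h4
    have e : Zstair (q + 2) ((q + 1 : ℕ) : ℤ) (ZstairInv (q + 2) ((n : ℝ) / x)) = MM (dd (q + 2)) 0 (t n) :=
      Zstair_MM q 0 (t n) h4
    simp only [Pi.div_apply, e]
    have := (hbpos n).ne'
    field_simp; ring
  have htot := (hfirst.add hsecond).add hratio
  have e : ((q : ℝ) + 2) * s ^ 2 / 2 + 0 + -((q + 1) * s ^ 2 / 2) = s ^ 2 / 2 := by ring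
  rw [e] at htot
  refine htot.congr' ?_
  have hJpos : ∀ᶠ n in atTop, 0 < JJ q n (t n) (y n) := hJ.eventually_const_lt (by positivity)
  have hJ0pos : ∀ᶠ n in atTop, 0 < JJ q n (t n) x := hJ0.eventually_const_lt hA0
  filter_upwards [hJpos, hJ0pos, htpos] with n h1 h2 h3
  have hp := pp_pos q _ h3
  have hq : Hpoly (q + 2) n (y n) / Hpoly (q + 2) n x =
      JJ q n (t n) (y n) / JJ q n (t n) x * Real.exp ((y n - x) * MM (dd (q + 2)) 0 (t n)) := by
    have hHx : Hpoly (q + 2) n x ≠ 0 := by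
      intro h0
      rw [JJ, h0] at h2; simp at h2
    have e1 : Real.exp ((y n - x) * MM (dd (q + 2)) 0 (t n)) * Real.exp (-(y n * MM (dd (q + 2)) 0 (t n))) =
        Real.exp (-(x * MM (dd (q + 2)) 0 (t n))) := by
      rw [← Real.exp_add]; congr 1; ring
    unfold JJ
    rw [← e1]
    have := Real.exp_pos (-(n * t n))
    have := Real.exp_pos (-(y n * MM (dd (q + 2)) 0 (t n)))
    have := Real.exp_pos ((y n - x) * MM (dd (q + 2)) 0 (t n))
    have := Real.pi_pos
    field_simp
  rw [expectK_eq _ _ _ _ _ _ hx]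
  change _ = Real.log (Real.exp (-(s * a n / b n)) * (Hpoly (q + 2) n (y n) / Hpoly (q + 2) n x))
  rw [hq, Real.log_mul (Real.exp_pos _).ne' (by positivity), Real.log_mul (by positivity) (Real.exp_pos _).ne',
    Real.log_exp, Real.log_exp]
  simp only [hydef, hwdef]
  have := (hbpos n).ne'
  field_simp; ring

end KP

theorem key_proposition (ℓ : ℕ) (hℓ : 2 ≤ ℓ) (x : ℝ) (hx : 0 < x)
    (a b : ℕ → ℝ) (hbpos : ∀ n, 0 < b n)
    (ha : (fun n : ℕ => a n - x * Zstair ℓ ((ℓ : ℤ) - 1) (ZstairInv ℓ ((n : ℝ) / x)))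
      =o[atTop] fun n : ℕ => (n : ℝ) ^ (((ℓ : ℝ) - 1) / (2 * (ℓ : ℝ))))
    (hb : Tendsto (fun n : ℕ => b n / bseq ℓ x n) atTop (nhds 1)) :
    ∀ s : ℝ,
      Tendsto (fun n : ℕ =>
          Real.log (expectK ℓ n x (fun k => Real.exp (s * (((k : ℝ) - a n) / b n)))))
        atTop (nhds (s ^ 2 / 2)) := by
  intro s
  obtain ⟨q, rfl⟩ : ∃ q, ℓ = q + 2 := ⟨ℓ - 2, by omega⟩
  refine KP.main q x hx a b hbpos ?_ hb s
  have e : (((q + 2 : ℕ) : ℤ) - 1) = ((q + 1 : ℕ) : ℤ) := by push_cast; ring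
  rw [e] at ha
  unfold bseq
  have hK := KP.KK_pos q 1
  refine ha.const_mul_right (c := (x * Kconst (q + 2)) ^ ((1 : ℝ) / (2 * ((q + 2 : ℕ) : ℝ))) /
    Real.sqrt (((q + 2 : ℕ) : ℝ) * (((q + 2 : ℕ) : ℝ) - 1))) ?_
  rw [KP.Kconst_eq]
  have e2 : (((q + 2 : ℕ) : ℝ) - 1) = q + 1 := by push_cast; ring
  rw [e2]
  positivity
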